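/- arXiv:1907.07376 — 2 statements merged into one kernel-verified Lean document; each statement's English description precedes it below -/
import Mathlib

section
/- Let G = (V,E) be a connected loopless multigraph whose vertex set is partitioned into nonempty cliques V_1, ..., V_k, and set M_0 = ∪_{1≤i<j≤k} E_G(V_i,V_j). Suppose M_0 is a matching of G. Let G* be the graph obtained from G by identifying all vertices of each V_i to a single vertex v_i (for i = 1,...,k) and removing all resulting loops. Then τ_G(M_0) = (∏_{i=1}^k |V_i|^{|V_i|-2}) · Σ_{T ∈ ST(G*)} ∏_{e ∈ M_0 − E(T)} ( |V_{a(e)}|^{-1} + |V_{b(e)}|^{-1} ), where for each edge e of G* the vertices v_{a(e)} and v_{b(e)} are its two ends in G* and ST(G*) denotes the set of spanning trees of G*. -/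
/-!
Spanning trees of multigraphs: common definitions.

A multigraph on a vertex type `V` with edge type `E` is given by an incidence
map `inc : E → Sym2 V` sending each edge to its (unordered) pair of endpoints.
-/

namespace PaperST

universe u v

/-- A multigraph on vertex type `V` with edge type `E`. -/
structure Multigraph (V : Type u) (E : Type v) where
  /-- the two (possibly equal) endpoints of each edge -/
  inc : E → Sym2 V

namespace Multigraph

variable {V : Type u} {E : Type v}

/-- One step along an edge of `T`. -/
def Step (G : Multigraph V E) (T : Set E) (u v : V) : Prop :=
  ∃ e ∈ T, G.inc e = s(u, v)

theorem step_symm (G : Multigraph V E) (T : Set E) : Symmetric (G.Step T) := by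
  rintro u v ⟨e, he, hinc⟩
  exact ⟨e, he, by rw [hinc]; exact Sym2.eq_swap⟩

/-- Reachability using only edges in `T`. -/
def Reach (G : Multigraph V E) (T : Set E) : V → V → Prop :=
  Relation.ReflTransGen (G.Step T)

/-- The spanning subgraph `G⟨T⟩` is connected. -/
def ConnectedOn (G : Multigraph V E) (T : Set E) : Prop :=
  ∀ u v : V, G.Reach T u v

/-- `G` is connected. -/
def Connected (G : Multigraph V E) : Prop :=
  G.ConnectedOn Set.univ

/-- `G` has no loops. -/
def Loopless (G : Multigraph V E) : Prop :=
  ∀ e : E, ¬ (G.inc e).IsDiag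

/-- A spanning tree of a (finite) multigraph: a connected spanning subgraph
with `|V| - 1` edges. -/
def IsSpanningTree (G : Multigraph V E) (T : Set E) : Prop :=
  G.ConnectedOn T ∧ T.ncard + 1 = Nat.card V

/-- The set `ST_G(M)` of spanning trees of `G` containing all edges of `M`. -/
def ST (G : Multigraph V E) (M : Set E) : Set (Set E) :=
  {T | G.IsSpanningTree T ∧ M ⊆ T}

/-- `τ_G(M)`: the number of spanning trees of `G` containing all edges of `M`. -/
noncomputable def tau (G : Multigraph V E) (M : Set E) : ℕ :=
  (G.ST M).ncard

/-- The spanning subgraph `G⟨W⟩` is a forest (no cycles): there are no loops in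
`W` and every edge of `W` is a bridge of `G⟨W⟩`. -/
def IsForest (G : Multigraph V E) (W : Set E) : Prop :=
  ∀ e ∈ W, ¬ (G.inc e).IsDiag ∧
    ∀ u v : V, G.inc e = s(u, v) → ¬ G.Reach (W \ {e}) u v

/-- Edges with all endpoints in `U`: the edge set of the induced subgraph `G[U]`. -/
def edgesWithin (G : Multigraph V E) (U : Set V) : Set E :=
  {e | ∀ v ∈ G.inc e, v ∈ U}

/-- `E_G(U₁, U₂)`: edges with one end in `U₁` and the other end in `U₂`. -/
def edgesBetween (G : Multigraph V E) (U₁ U₂ : Set V) : Set E :=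
  {e | ∃ u v, G.inc e = s(u, v) ∧ u ∈ U₁ ∧ v ∈ U₂}

/-- `E_G(U) = E_G(U, V − U)`: edges with one end in `U` and the other outside. -/
def edgeBoundary (G : Multigraph V E) (U : Set V) : Set E :=
  G.edgesBetween U Uᶜ

/-- `U` is a clique of `G`: the induced subgraph `G[U]` is a complete graph,
i.e. exactly one edge joins each pair of distinct vertices of `U`, and there
are neither loops nor parallel edges inside `U`. -/
def IsClique (G : Multigraph V E) (U : Set V) : Prop :=
  (∀ u ∈ U, ∀ v ∈ U, u ≠ v → ∃! e : E, G.inc e = s(u, v)) ∧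
    ∀ e ∈ G.edgesWithin U, ¬ (G.inc e).IsDiag

/-- The degree of a vertex: the number of edges incident with it. -/
noncomputable def degree (G : Multigraph V E) (v : V) : ℕ :=
  {e : E | v ∈ G.inc e}.ncard

/-- The vertices incident with some edge of `W`: the vertex set of `G[W]`. -/
def supp (G : Multigraph V E) (W : Set E) : Set V :=
  {v | ∃ e ∈ W, v ∈ G.inc e}

/-- Edges `e` and `f` lie in the same component of `G[W]`. -/
def EdgeConn (G : Multigraph V E) (W : Set E) (e f : E) : Prop :=
  ∃ u v : V, u ∈ G.inc e ∧ v ∈ G.inc f ∧ G.Reach W u v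

/-- Every component of `G[W]` is a star whose center lies in `C`. -/
def StarComponents (G : Multigraph V E) (W : Set E) (C : Set V) : Prop :=
  ∀ e ∈ W, ∃ w ∈ C, ∀ f ∈ W, G.EdgeConn W e f →
    (w ∈ G.inc f ∧ ¬ (G.inc f).IsDiag ∧
      ∀ g ∈ W, G.EdgeConn W e g → G.inc g = G.inc f → g = f)

/-- The setoid on `V` identifying the vertices connected by edges of `W`. -/
def contractSetoid (G : Multigraph V E) (W : Set E) : Setoid V where
  r := G.Reach W
  iseqv := ⟨fun _ => Relation.ReflTransGen.refl,
    fun h =>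
      haveI : Std.Symm (G.Step W) := ⟨fun _ _ h' => G.step_symm W h'⟩
      (Relation.ReflTransGen.symmetric (r := G.Step W)).symm _ _ h,
    fun h h' => Relation.ReflTransGen.trans h h'⟩

/-- The contraction `G/W` of the edges in `W`. -/
def contract (G : Multigraph V E) (W : Set E) :
    Multigraph (Quotient (G.contractSetoid W)) {e : E // e ∉ W} :=
  ⟨fun e => (G.inc e.val).map (Quotient.mk (G.contractSetoid W))⟩

/-- Deletion `G − D` of the edges in `D`. -/
def deleteEdges (G : Multigraph V E) (D : Set E) : Multigraph V {e : E // e ∉ D} :=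
  ⟨fun e => G.inc e.val⟩

/-- The closed neighbourhood `N_G[S]`. -/
def closedNbhd (G : Multigraph V E) (S : Set V) : Set V :=
  S ∪ {v | ∃ u ∈ S, ∃ e : E, G.inc e = s(u, v)}

/-- The induced subgraph `G[A]`, described using a choice `ends` of the pair of
endpoints of each edge. -/
def induce (G : Multigraph V E) (A : Set V) (ends : E → V × V)
    (hends : ∀ e, G.inc e = s((ends e).1, (ends e).2)) :
    Multigraph A {e : E // e ∈ G.edgesWithin A} :=
  ⟨fun e => s(⟨(ends e.val).1, e.prop _ (by rw [hends]; exact Sym2.mem_mk_left _ _)⟩,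
              ⟨(ends e.val).2, e.prop _ (by rw [hends]; exact Sym2.mem_mk_right _ _)⟩)⟩

end Multigraph


open Multigraph

section Helpers

open scoped Classical

namespace Multigraph

theorem reach_symm {W : Type*} {A : Type*} (X : Multigraph W A) (S : Set A) {x y : W}
    (h : X.Reach S x y) : X.Reach S y x :=
  (X.contractSetoid S).symm h

theorem reach_lift {W W' : Type*} {A B : Type*} (X : Multigraph W A) (Y : Multigraph W' B)
    (S : Set A) (T : Set B) (p : W → W')
    (h : ∀ e ∈ S, ∀ u v, X.inc e = s(u, v) → Y.Reach T (p u) (p v)) {x y : W}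
    (hxy : X.Reach S x y) : Y.Reach T (p x) (p y) := by
  induction hxy with
  | refl => exact Relation.ReflTransGen.refl
  | tail _ hs ih =>
    obtain ⟨e, he, hi⟩ := hs
    exact Relation.ReflTransGen.trans ih (h e he _ _ hi)

theorem reach_eq {W W' : Type*} {A : Type*} (X : Multigraph W A)
    (S : Set A) (p : W → W')
    (h : ∀ e ∈ S, ∀ u v, X.inc e = s(u, v) → p u = p v) {x y : W}
    (hxy : X.Reach S x y) : p x = p y := by
  induction hxy with
  | refl => rfl
  | tail _ hs ih =>
    obtain ⟨e, he, hi⟩ := hs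
    exact ih.trans (h e he _ _ hi)

theorem reach_mono {W : Type*} {A : Type*} (X : Multigraph W A)
    {S T : Set A} (hST : S ⊆ T) {x y : W} (hxy : X.Reach S x y) : X.Reach T x y :=
  X.reach_lift X S T id (fun e he u v hi => Relation.ReflTransGen.single ⟨e, hST he, hi⟩) hxy

theorem reach_edge {W : Type*} {A : Type*} (X : Multigraph W A)
    {S : Set A} {e : A} (he : e ∈ S) {x y : W} (hi : X.inc e = s(x, y)) : X.Reach S x y :=
  Relation.ReflTransGen.single ⟨e, he, hi⟩

/-- image multigraph under a vertex map -/
def push {W ι : Type*} {A : Type*} (X : Multigraph W A) (p : W → ι) : Multigraph ι A :=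
  ⟨fun e => (X.inc e).map p⟩

theorem connectedOn_push {W ι : Type*} {A : Type*} (X : Multigraph W A) (p : W → ι)
    (hp : Function.Surjective p) (H F : Set A)
    (hH : ∀ x y, X.Reach H x y ↔ p x = p y) :
    X.ConnectedOn (H ∪ F) ↔ (X.push p).ConnectedOn F := by
  constructor
  · intro h i j
    obtain ⟨x, rfl⟩ := hp i
    obtain ⟨y, rfl⟩ := hp j
    refine X.reach_lift (X.push p) (H ∪ F) F p ?_ (h x y)
    rintro e (he | he) u v hi
    · rw [(hH u v).1 (X.reach_edge he hi)]
      exact Relation.ReflTransGen.refl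
    · refine (X.push p).reach_edge he ?_
      simp [push, hi]
  · intro h
    have key : ∀ i j, (X.push p).Reach F i j → ∀ x y, p x = i → p y = j →
        X.Reach (H ∪ F) x y := by
      intro i j hij
      induction hij with
      | refl =>
        intro x y hx hy
        exact X.reach_mono Set.subset_union_left ((hH x y).2 (hx.trans hy.symm))
      | tail _ hs ih =>
        rename_i b c _
        obtain ⟨e, he, hi⟩ := hs
        intro x y hx hy
        obtain ⟨⟨u, v⟩, huv⟩ : ∃ q : W × W, X.inc e = s(q.1, q.2) := by
          induction h' : X.inc e with
          | _ u v => exact ⟨(u, v), rfl⟩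
        simp only at huv
        simp only [push, huv, Sym2.map_mk, Sym2.eq_iff] at hi
        have key2 : ∀ u v, X.inc e = s(u, v) → p u = b → p v = c → X.Reach (H ∪ F) x y := by
          intro u v huv h1 h2
          refine (ih x u hx h1).trans ?_
          refine Relation.ReflTransGen.trans (X.reach_edge (Or.inr he) huv) ?_
          exact X.reach_mono Set.subset_union_left ((hH v y).2 (h2.trans hy.symm))
        rcases hi with ⟨h1, h2⟩ | ⟨h1, h2⟩
        · exact key2 u v huv h1 h2
        · exact key2 v u (by rw [huv]; exact Sym2.eq_swap) h2 h1
    intro x y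
    exact key _ _ (h (p x) (p y)) x y rfl rfl

theorem reach_insert {W : Type*} {A : Type*} (X : Multigraph W A) (H : Set A) (e : A) (u v : W)
    (he : X.inc e = s(u, v)) (x y : W) :
    X.Reach (insert e H) x y → X.Reach H x y ∨ (X.Reach H x u ∧ X.Reach H v y) ∨
      (X.Reach H x v ∧ X.Reach H u y) := by
  intro h
  induction h with
  | refl => exact Or.inl Relation.ReflTransGen.refl
  | tail _ hs ih =>
    obtain ⟨f, hf, hi⟩ := hs
    rcases hf with rfl | hf
    · rw [he, Sym2.eq_iff] at hi
      have r : ∀ z, X.Reach H z z := fun z => Relation.ReflTransGen.refl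
      rcases hi with ⟨rfl, rfl⟩ | ⟨rfl, rfl⟩ <;> grind
    · have := X.reach_edge hf hi
      rcases ih with h | ⟨h1, h2⟩ | ⟨h1, h2⟩
      · exact Or.inl (h.trans this)
      · exact Or.inr (Or.inl ⟨h1, h2.trans this⟩)
      · exact Or.inr (Or.inr ⟨h1, h2.trans this⟩)

/-- a set of `h` edges leaves at least `|W| - h` components -/
theorem card_le_of_reach {W : Type*} [Fintype W] {A : Type*} (X : Multigraph W A)
    (H : Finset A) : Fintype.card W ≤ H.card + Nat.card (Quotient (X.contractSetoid H)) := by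
  induction H using Finset.induction_on with
  | empty =>
    rw [← Nat.card_eq_fintype_card]
    simp only [Finset.card_empty, zero_add]
    refine Nat.card_le_card_of_injective (fun x => Quotient.mk (X.contractSetoid _) x) ?_
    intro x y hxy
    have : X.Reach _ x y := Quotient.exact hxy
    refine X.reach_eq _ id ?_ this
    simp
  | insert e H heH ih =>
    rw [Finset.card_insert_of_notMem heH]
    have : Nat.card (Quotient (X.contractSetoid (H : Set A))) ≤
        Nat.card (Option (Quotient (X.contractSetoid ((insert e H : Finset A) : Set A)))) := by
      obtain ⟨⟨u, v⟩, huv⟩ : ∃ q : W × W, X.inc e = s(q.1, q.2) := by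
        induction h' : X.inc e with
        | _ u v => exact ⟨(u, v), rfl⟩
      simp only at huv
      let φ : Quotient (X.contractSetoid (H : Set A)) →
        Option (Quotient (X.contractSetoid ((insert e H : Finset A) : Set A))) :=
        fun q => if q = Quotient.mk _ v then none else some (Quotient.mk _ q.out)
      refine Nat.card_le_card_of_injective φ ?_
      intro q q' hqq
      simp only [φ] at hqq
      split_ifs at hqq with h1 h2 h2
      · rw [h1, h2]
      · have h3 : X.Reach _ q.out q'.out := Quotient.exact (Option.some.inj hqq)
        rw [Finset.coe_insert] at h3
        rcases X.reach_insert H e u v huv _ _ h3 with h | ⟨h, h'⟩ | ⟨h, h'⟩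
        · rw [← q.out_eq, ← q'.out_eq]
          exact Quotient.sound h
        · exfalso; apply h2
          rw [← q'.out_eq]
          exact Quotient.sound (X.reach_symm _ h')
        · exfalso; apply h1
          rw [← q.out_eq]
          exact Quotient.sound h
    rw [Finite.card_option] at this
    omega

theorem card_le_of_reach' {W ι : Type*} [Fintype W] [Fintype ι] {A : Type*} (X : Multigraph W A)
    (p : W → ι) (H : Finset A) (hH : ∀ x y, X.Reach H x y ↔ p x = p y) :
    Fintype.card W ≤ H.card + Fintype.card ι := by
  refine (X.card_le_of_reach H).trans ?_
  rw [← Nat.card_eq_fintype_card (α := ι)]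
  gcongr
  refine Nat.card_le_card_of_injective (Quotient.lift p (fun a b hab => (hH a b).1 hab)) ?_
  intro a b
  induction a using Quotient.ind
  induction b using Quotient.ind
  intro h
  exact Quotient.sound ((hH _ _).2 h)

theorem card_le_of_connected {W : Type*} [Fintype W] {A : Type*} (X : Multigraph W A)
    (H : Finset A) (hH : X.ConnectedOn H) : Fintype.card W ≤ H.card + 1 :=
  X.card_le_of_reach' (fun _ => ()) H (fun x y => by simp [hH x y])

/-- finset spanning tree -/
def Tr {W : Type*} {A : Type*} [Fintype W] (X : Multigraph W A) (S : Finset A) : Prop :=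
  X.ConnectedOn S ∧ S.card + 1 = Fintype.card W

theorem tr_iff {W : Type*} {A : Type*} [Fintype W] (X : Multigraph W A) (S : Finset A) :
    X.Tr S ↔ X.IsSpanningTree (S : Set A) := by
  simp [Tr, IsSpanningTree, Set.ncard_coe_finset]

theorem tr_push {W ι : Type*} [Fintype W] [Fintype ι] {A : Type*} (X : Multigraph W A) (p : W → ι)
    (hp : Function.Surjective p) (H F : Finset A) (hd : Disjoint H F)
    (hH : ∀ x y, X.Reach H x y ↔ p x = p y) :
    X.Tr (H ∪ F) ↔ H.card + Fintype.card ι = Fintype.card W ∧ (X.push p).Tr F := by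
  have h0 := X.connectedOn_push p hp H F hH
  have h1 := X.card_le_of_reach' p H hH
  unfold Tr
  rw [Finset.card_union_of_disjoint hd, Finset.coe_union, h0]
  constructor
  · rintro ⟨h, h2⟩
    have := (X.push p).card_le_of_connected F h
    refine ⟨?_, h, ?_⟩ <;> omega
  · rintro ⟨h, h2, h3⟩
    refine ⟨h2, ?_⟩
    omega

/-- no loops in trees -/
theorem Tr.not_loop {W : Type*} [Fintype W] {A : Type*} {X : Multigraph W A} {S : Finset A}
    (h : X.Tr S) {e : A} (he : e ∈ S) (u : W) : X.inc e ≠ s(u, u) := by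
  intro hi
  have hc : X.ConnectedOn ((S.erase e : Finset A) : Set A) := by
    intro x y
    refine X.reach_lift X S _ id ?_ (h.1 x y)
    intro f hf a b hab
    by_cases hfe : f = e
    · subst hfe
      rw [hi, Sym2.eq_iff] at hab
      obtain ⟨rfl, rfl⟩ : u = a ∧ u = b := by tauto
      exact Relation.ReflTransGen.refl
    · exact X.reach_edge (by simpa [hfe] using hf) hab
  have := X.card_le_of_connected _ hc
  rw [Finset.card_erase_of_mem he] at this
  have h2 := h.2
  have : 0 < S.card := Finset.card_pos.2 ⟨e, he⟩
  omega

/-- merging vertex `b` into `a` -/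
noncomputable def mrg {W : Type*} {a b : W} (hab : a ≠ b) (x : W) : {x : W // x ≠ b} :=
  if h : x = b then ⟨a, hab⟩ else ⟨x, h⟩

theorem tr_mrg {W : Type*} [Fintype W] {A : Type*} (X : Multigraph W A) (e : A) (a b : W)
    (hab : a ≠ b) (he : X.inc e = s(a, b)) (F : Finset A) (heF : e ∉ F) :
    X.Tr (insert e F) ↔ (X.push (mrg hab)).Tr F := by
  rw [Finset.insert_eq, X.tr_push (mrg hab) _ {e} F (by simpa using heF)]
  · have : ({e} : Finset A).card + Fintype.card {x // x ≠ b} = Fintype.card W := by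
      have := Fintype.card_pos_iff.2 ⟨a⟩
      simp [Fintype.card_subtype_compl]
      omega
    simp only [this, true_and]
  · intro x y
    have h1 : X.Reach ({e} : Finset A) a b := X.reach_edge (by simp) he
    constructor
    · intro h
      refine X.reach_eq _ (mrg hab) ?_ h
      intro f hf u v huv
      simp only [Finset.coe_singleton, Set.mem_singleton_iff] at hf
      subst hf
      rw [he, Sym2.eq_iff] at huv
      rcases huv with ⟨rfl, rfl⟩ | ⟨rfl, rfl⟩ <;> simp [mrg, hab]
    · have r : ∀ z, X.Reach ({e} : Finset A) z z := fun z => Relation.ReflTransGen.refl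
      have h2 := X.reach_symm _ h1
      unfold mrg
      split_ifs with h3 h4 h4 <;> simp only [Subtype.mk.injEq] <;> grind
  · rintro ⟨x, hx⟩
    exact ⟨x, by simp [mrg, hx]⟩

theorem push_push {W W' W'' : Type*} {A : Type*} (X : Multigraph W A) (p : W → W') (q : W' → W'') :
    (X.push p).push q = X.push (q ∘ p) := by
  simp [push, Sym2.map_map]

end Multigraph

namespace Multigraph

theorem sum_edges_two {W B : Type*} (X : Multigraph W B) (U : Finset W) (K : Finset B)
    (hK1 : ∀ e ∈ K, ∃ u ∈ U, ∃ v ∈ U, u ≠ v ∧ X.inc e = s(u, v))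
    (hK2 : ∀ u ∈ U, ∀ v ∈ U, u ≠ v → ∃! e, e ∈ K ∧ X.inc e = s(u, v))
    (φ : B → ℚ) (ψ : W × W → ℚ)
    (h : ∀ e ∈ K, ∀ u ∈ U, ∀ v ∈ U, u ≠ v → X.inc e = s(u, v) → φ e = ψ (u, v)) :
    2 * ∑ e ∈ K, φ e = ∑ x ∈ U.offDiag, ψ x := by
  have h1 : ∀ x ∈ U.offDiag, ψ x = ∑ e ∈ K, if X.inc e = s(x.1, x.2) then φ e else 0 := by
    rintro ⟨u, v⟩ hx
    simp only [Finset.mem_offDiag] at hx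
    obtain ⟨hu, hv, huv⟩ := hx
    obtain ⟨e, ⟨he, hi⟩, hun⟩ := hK2 u hu v hv huv
    rw [Finset.sum_eq_single e]
    · simp only [hi, if_true]
      exact (h e he u hu v hv huv hi).symm
    · intro f hf hfe
      rw [if_neg]
      intro hi'
      exact hfe (hun f ⟨hf, hi'⟩)
    · intro h'; exact absurd he h'
  rw [Finset.sum_congr rfl h1, Finset.sum_comm, Finset.mul_sum]
  refine Finset.sum_congr rfl ?_
  intro e he
  obtain ⟨u, hu, v, hv, huv, hi⟩ := hK1 e he
  rw [← Finset.sum_filter, Finset.sum_const]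
  have : U.offDiag.filter (fun x => X.inc e = s(x.1, x.2)) = {(u, v), (v, u)} := by
    ext ⟨a, b⟩
    simp only [Finset.mem_filter, Finset.mem_offDiag, hi, Sym2.eq_iff, Finset.mem_insert,
      Finset.mem_singleton, Prod.mk.injEq]
    grind
  rw [this, Finset.card_pair (by simp; grind)]
  simp

theorem sum_pairs {W ι : Type*} [Fintype ι] (U : Finset W) (p : W → ι) (b : ι → ℚ)
    (hb : ∀ i, b i = ((U.filter (fun u => p u = i)).card : ℚ)) (g : ι → ι → ℚ)
    (hg : ∀ i j, i ≠ j → b i * b j * g i j = (∏ x, b x) * (b i + b j)) :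
    ∑ x ∈ U.offDiag, (if p x.1 = p x.2 then 0 else g (p x.1) (p x.2)) =
      2 * ((Fintype.card ι : ℚ) - 1) * (U.card : ℚ) * ∏ x, b x := by
  have hn : ∑ i, b i = (U.card : ℚ) := by
    simp only [hb]
    rw [← Nat.cast_sum]
    congr 1
    exact (Finset.card_eq_sum_card_fiberwise (fun x _ => Finset.mem_univ (p x))).symm
  have h1 : ∑ x ∈ U.offDiag, (if p x.1 = p x.2 then 0 else g (p x.1) (p x.2)) =
      ∑ x ∈ U ×ˢ U, (if p x.1 = p x.2 then 0 else g (p x.1) (p x.2)) := by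
    refine Finset.sum_subset ?_ ?_
    · intro x hx
      simp only [Finset.mem_offDiag, Finset.mem_product] at hx ⊢
      exact ⟨hx.1, hx.2.1⟩
    · intro x hx hx'
      simp only [Finset.mem_offDiag, Finset.mem_product] at hx hx'
      rw [if_pos]
      have : x.1 = x.2 := by tauto
      rw [this]
  have h2 : ∀ (f : ι → ℚ), ∑ u ∈ U, f (p u) = ∑ i, b i * f i := by
    intro f
    rw [← Finset.sum_fiberwise_of_maps_to (t := Finset.univ) (g := p)
      (fun x _ => Finset.mem_univ _)]
    refine Finset.sum_congr rfl (fun i _ => ?_)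
    rw [hb, ← nsmul_eq_mul, ← Finset.sum_const]
    refine Finset.sum_congr rfl (fun u hu => ?_)
    rw [(Finset.mem_filter.1 hu).2]
  rw [h1, Finset.sum_product]
  simp only
  have h3 : ∀ u ∈ U, ∑ v ∈ U, (if p u = p v then 0 else g (p u) (p v)) =
      (fun i => ∑ j, b j * (if i = j then 0 else g i j)) (p u) := by
    intro u _
    exact h2 (fun j => if p u = j then 0 else g (p u) j)
  rw [Finset.sum_congr rfl h3, h2 (fun i => ∑ j, b j * (if i = j then 0 else g i j))]
  have h4 : ∀ i, b i * ∑ j, b j * (if i = j then 0 else g i j) =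
      (∏ x, b x) * (∑ j, (b i + b j) - 2 * b i) := by
    intro i
    rw [Finset.mul_sum]
    have : ∀ j, b i * (b j * (if i = j then 0 else g i j)) =
        (∏ x, b x) * ((b i + b j) - if i = j then 2 * b i else 0) := by
      intro j
      split_ifs with hij
      · subst hij; ring
      · rw [sub_zero, ← hg i j hij]; ring
    rw [Finset.sum_congr rfl (fun j _ => this j), ← Finset.mul_sum, Finset.sum_sub_distrib]
    simp
  rw [Finset.sum_congr rfl (fun i _ => h4 i), ← Finset.mul_sum, Finset.sum_sub_distrib]
  simp only [Finset.sum_add_distrib, Finset.sum_const, Finset.card_univ, nsmul_eq_mul,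
    ← Finset.mul_sum, hn]
  ring

theorem prod_mrg {W ι : Type*} [Fintype ι] (U : Finset W) (p : W → ι) (i j : ι) (hij : i ≠ j) :
    ((U.filter (fun u => p u = i)).card : ℚ) * ((U.filter (fun u => p u = j)).card : ℚ) *
      (∏ x : {x // x ≠ j}, ((U.filter (fun u => (mrg hij ∘ p) u = x)).card : ℚ)) =
    (∏ x, ((U.filter (fun u => p u = x)).card : ℚ)) *
      (((U.filter (fun u => p u = i)).card : ℚ) + ((U.filter (fun u => p u = j)).card : ℚ)) := by
  set b : ι → ℚ := fun x => ((U.filter (fun u => p u = x)).card : ℚ) with hb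
  have h1 : ∀ x : {x // x ≠ j}, ((U.filter (fun u => (mrg hij ∘ p) u = x)).card : ℚ) =
      if x.1 = i then b i + b j else b x := by
    rintro ⟨x, hx⟩
    simp only [hb]
    split_ifs with h
    · subst h
      rw [← Nat.cast_add, ← Finset.card_union_of_disjoint]
      · congr 2
        ext u
        simp only [Finset.mem_filter, Finset.mem_union]
        simp only [mrg, Function.comp]
        split_ifs <;> simp <;> grind
      · rw [Finset.disjoint_filter]
        intro u _ h1 h2
        exact hij (h1.symm.trans h2)
    · congr 2
      ext u
      simp only [Finset.mem_filter]
      simp only [mrg, Function.comp]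
      split_ifs <;> simp <;> grind
  rw [Finset.prod_congr rfl (fun x _ => h1 x)]
  have h2 : ∀ f : ι → ℚ, ∏ x, f x = f j * ∏ x : {x // x ≠ j}, f x := by
    intro f
    rw [← Finset.mul_prod_erase Finset.univ f (Finset.mem_univ j)]
    congr 1
    rw [← Finset.prod_subtype (Finset.univ.erase j) (p := fun x => x ≠ j) (by simp) f]
  have h3 : ∀ f : {x // x ≠ j} → ℚ, ∏ x, f x =
      f ⟨i, hij⟩ * ∏ x ∈ Finset.univ.erase ⟨i, hij⟩, f x := by
    intro f
    rw [← Finset.mul_prod_erase Finset.univ f (Finset.mem_univ _)]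
  rw [h2 b, h3, h3 (fun x => b x)]
  have h4 : ∏ x ∈ (Finset.univ : Finset {x // x ≠ j}).erase ⟨i, hij⟩,
      (if x.1 = i then b i + b j else b x) =
      ∏ x ∈ (Finset.univ : Finset {x // x ≠ j}).erase ⟨i, hij⟩, b x := by
    refine Finset.prod_congr rfl ?_
    rintro ⟨x, hx⟩ hx'
    rw [if_neg]
    simpa using hx'
  rw [h4]
  simp only [if_true]
  change b i * b j * _ = _
  ring

theorem pitman {W B : Type*} (X : Multigraph W B) (U : Finset W) (K : Finset B)
    (hK1 : ∀ e ∈ K, ∃ u ∈ U, ∃ v ∈ U, u ≠ v ∧ X.inc e = s(u, v))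
    (hK2 : ∀ u ∈ U, ∀ v ∈ U, u ≠ v → ∃! e, e ∈ K ∧ X.inc e = s(u, v)) (m : ℕ) :
    ∀ (ι : Type*) [Fintype ι] (p : W → ι), Fintype.card ι = m + 1 →
    (U.card : ℚ) ^ 2 * ((K.powerset.filter (fun F => (X.push p).Tr F)).card : ℚ) =
      (U.card : ℚ) ^ (m + 1) * ∏ i, ((U.filter (fun u => p u = i)).card : ℚ) := by
  induction m with
  | zero =>
    intro ι _ p hι
    rw [zero_add] at hι
    obtain ⟨i, hi⟩ := Fintype.card_eq_one_iff.1 hι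
    have h1 : K.powerset.filter (fun F => (X.push p).Tr F) = {∅} := by
      ext F
      simp only [Finset.mem_filter, Finset.mem_powerset, Finset.mem_singleton, Tr, hι]
      constructor
      · rintro ⟨_, _, h⟩
        exact Finset.card_eq_zero.1 (by omega)
      · rintro rfl
        refine ⟨by simp, ?_, by simp⟩
        intro x y
        rw [hi x, hi y]
        exact Relation.ReflTransGen.refl
    have h2 : ∀ j, (U.filter (fun u => p u = j)) = U := by
      intro j
      rw [Finset.filter_true_of_mem]
      intro u _
      rw [hi (p u), hi j]
    simp only [h1, h2, Finset.card_singleton, Finset.prod_const, Finset.card_univ, hι]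
    push_cast; ring
  | succ m ih =>
    intro ι _ p hι
    set n : ℚ := (U.card : ℚ) with hn
    set b : ι → ℚ := fun i => ((U.filter (fun u => p u = i)).card : ℚ) with hb
    set TT := K.powerset.filter (fun F => (X.push p).Tr F) with hTT
    let g : ι → ι → ℚ := fun i j => if h : i ≠ j then
      ∏ x : {x // x ≠ j}, ((U.filter (fun u => (mrg h ∘ p) u = x)).card : ℚ) else 0
    have hg : ∀ i j, i ≠ j → b i * b j * g i j = (∏ x, b x) * (b i + b j) := by
      intro i j hij
      simp only [g, dif_pos hij]
      exact prod_mrg U p i j hij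
    have hsp := sum_pairs U p b (fun i => rfl) g hg
    -- count
    have hcount : ((m : ℚ) + 1) * (TT.card : ℚ) =
        ∑ e ∈ K, ((TT.filter (fun F => e ∈ F)).card : ℚ) := by
      have h1 : ∀ F ∈ TT, ((m : ℚ) + 1) = ∑ e ∈ K, if e ∈ F then (1 : ℚ) else 0 := by
        intro F hF
        simp only [hTT, Finset.mem_filter, Finset.mem_powerset] at hF
        rw [← Finset.sum_filter, Finset.filter_mem_eq_inter, Finset.inter_eq_right.2 hF.1]
        have h5 := hF.2.2
        rw [hι] at h5
        have : F.card = m + 1 := by omega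
        simp [this]
      have h2 : ((m : ℚ) + 1) * (TT.card : ℚ) = ∑ F ∈ TT, ((m : ℚ) + 1) := by
        simp; ring
      rw [h2, Finset.sum_congr rfl h1, Finset.sum_comm]
      refine Finset.sum_congr rfl (fun e _ => ?_)
      simp
    have hedge : ∀ e ∈ K, ∀ u ∈ U, ∀ v ∈ U, u ≠ v → X.inc e = s(u, v) →
        n ^ 2 * ((TT.filter (fun F => e ∈ F)).card : ℚ) =
        (fun x : W × W => n ^ (m + 1) * if p x.1 = p x.2 then 0 else g (p x.1) (p x.2)) (u, v) := by
      intro e he u hu v hv huv hi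
      simp only
      split_ifs with hp
      · have : TT.filter (fun F => e ∈ F) = ∅ := by
          rw [Finset.filter_eq_empty_iff]
          intro F hF heF
          have := (Finset.mem_filter.1 hF).2.not_loop heF (p u)
          apply this
          simp [push, hi, hp]
        simp [this]
      · simp only [g, dif_pos (show p u ≠ p v from hp)]
        have hι' : Fintype.card {x // x ≠ p v} = m + 1 := by
          simp [Fintype.card_subtype_compl, hι]
        refine Eq.trans ?_ ((ih {x // x ≠ p v} (mrg hp ∘ p) hι').trans (by congr!))
        congr 2
        have hie : (X.push p).inc e = s(p u, p v) := by simp [push, hi]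
        refine Finset.card_nbij' (fun F => F.erase e) (fun F => insert e F) ?_ ?_ ?_ ?_
        · intro F hF
          simp only [hTT, Finset.coe_filter, Finset.mem_filter, Finset.mem_powerset,
            Set.mem_setOf_eq] at hF ⊢
          refine ⟨(Finset.erase_subset _ _).trans hF.1.1, ?_⟩
          rw [← push_push, ← (X.push p).tr_mrg e _ _ hp hie _ (Finset.notMem_erase _ _),
            Finset.insert_erase hF.2]
          exact hF.1.2
        · intro F hF
          simp only [hTT, Finset.coe_filter, Finset.mem_filter, Finset.mem_powerset,
            Set.mem_setOf_eq] at hF ⊢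
          have heF : e ∉ F := by
            intro heF
            apply hF.2.not_loop heF ⟨p u, hp⟩
            simp [push, hi, mrg, hp]
          refine ⟨⟨Finset.insert_subset he hF.1, ?_⟩, Finset.mem_insert_self _ _⟩
          rw [(X.push p).tr_mrg e _ _ hp hie _ heF, push_push]
          exact hF.2
        · intro F hF
          simp only [hTT, Finset.coe_filter, Finset.mem_filter, Finset.mem_powerset,
            Set.mem_setOf_eq] at hF ⊢
          exact Finset.insert_erase hF.2
        · intro F hF
          simp only [Finset.coe_filter, Finset.mem_powerset,
            Set.mem_setOf_eq] at hF ⊢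
          have heF : e ∉ F := by
            intro heF
            apply hF.2.not_loop heF ⟨p u, hp⟩
            simp [push, hi, mrg, hp]
          exact Finset.erase_insert heF
    have h2 := X.sum_edges_two U K hK1 hK2 (fun e => n ^ 2 * ((TT.filter (fun F => e ∈ F)).card : ℚ))
      (fun x : W × W => n ^ (m + 1) * if p x.1 = p x.2 then 0 else g (p x.1) (p x.2)) hedge
    rw [← Finset.mul_sum, ← hcount, ← Finset.mul_sum, hsp, hι] at h2
    have hm : (2 * ((m : ℚ) + 1)) ≠ 0 := by positivity
    apply mul_left_cancel₀ hm
    push_cast at h2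
    calc _ = 2 * (n ^ 2 * (((m : ℚ) + 1) * (TT.card : ℚ))) := by ring
      _ = _ := by rw [h2]; ring

theorem star_count {W B : Type*} (X : Multigraph W B) (St : Finset B) (en : B → W) (c : W)
    (hSt : ∀ e ∈ St, X.inc e = s(en e, c)) {ι : Type*} [Fintype ι] (p : W → ι)
    (hpc : ∀ e ∈ St, p (en e) ≠ p c) :
    (St.powerset.filter (fun F => (X.push p).Tr F)).card =
      ∏ i : {x // x ≠ p c}, (St.filter (fun e => p (en e) = i)).card := by
  have hinc : ∀ e ∈ St, (X.push p).inc e = s(p (en e), p c) := by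
    intro e he; simp [push, hSt e he]
  have hcard : Fintype.card {x // x ≠ p c} + 1 = Fintype.card ι := by
    have := Fintype.card_pos_iff.2 ⟨p c⟩
    simp [Fintype.card_subtype_compl]
    omega
  have hsurj : ∀ F ⊆ St, (X.push p).ConnectedOn F ↔ ∀ i, i ≠ p c → ∃ e ∈ F, p (en e) = i := by
    intro F hF
    constructor
    · intro h i hi
      by_contra hcon
      push Not at hcon
      have := (X.push p).reach_eq F (fun x => x = i) ?_ (h i (p c))
      · have h9 : (p c = i) := by rw [← this]
        exact hi h9.symm
      · intro e he u v huv
        rw [hinc e (hF he), Sym2.eq_iff] at huv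
        have := hcon e he
        simp only [eq_iff_iff]
        grind
    · intro h
      have key : ∀ i, (X.push p).Reach F i (p c) := by
        intro i
        by_cases hi : i = p c
        · rw [hi]; exact Relation.ReflTransGen.refl
        · obtain ⟨e, he, rfl⟩ := h i hi
          exact (X.push p).reach_edge he (hinc e (hF he))
      intro x y
      exact (key x).trans ((X.push p).reach_symm _ (key y))
  rw [← Fintype.card_piFinset]
  symm
  refine Finset.card_bij (fun s _ => Finset.univ.image s) ?_ ?_ ?_
  · intro s hs
    rw [Fintype.mem_piFinset] at hs
    simp only [Finset.mem_filter] at hs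
    have hsub : Finset.univ.image s ⊆ St := by
      intro e he
      simp only [Finset.mem_image, Finset.mem_univ, true_and] at he
      obtain ⟨i, rfl⟩ := he
      exact (hs i).1
    simp only [Finset.mem_filter, Finset.mem_powerset]
    refine ⟨hsub, (hsurj _ hsub).2 ?_, ?_⟩
    · intro i hi
      exact ⟨s ⟨i, hi⟩, by simp, (hs ⟨i, hi⟩).2⟩
    · rw [Finset.card_image_of_injective, Finset.card_univ, hcard]
      intro i j hij
      apply Subtype.ext
      rw [← (hs i).2, ← (hs j).2, hij]
  · intro s hs t ht hst
    rw [Fintype.mem_piFinset] at hs ht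
    simp only [Finset.mem_filter] at hs ht
    funext i
    have : s i ∈ Finset.univ.image t := by rw [← hst]; simp
    simp only [Finset.mem_image, Finset.mem_univ, true_and] at this
    obtain ⟨j, hj⟩ := this
    have : j = i := by
      apply Subtype.ext
      rw [← (hs i).2, ← (ht j).2, hj]
    rw [← hj, this]
  · intro F hF
    simp only [Finset.mem_filter, Finset.mem_powerset] at hF
    obtain ⟨hF, hc, hFc⟩ := hF
    have h := (hsurj F hF).1 hc
    choose s hs1 hs2 using h
    have hinj : Function.Injective (fun i : {x // x ≠ p c} => s i.1 i.2) := by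
      intro i j hij
      apply Subtype.ext
      rw [← hs2 i.1 i.2, ← hs2 j.1 j.2]
      exact congrArg _ (congrArg _ hij)
    refine ⟨fun i => s i.1 i.2, ?_, ?_⟩
    · rw [Fintype.mem_piFinset]
      intro i
      simp only [Finset.mem_filter]
      exact ⟨hF (hs1 _ _), hs2 _ _⟩
    · refine Finset.eq_of_subset_of_card_le ?_ ?_
      · intro e he
        simp only [Finset.mem_image, Finset.mem_univ, true_and] at he
        obtain ⟨i, rfl⟩ := he
        exact hs1 _ _
      · rw [Finset.card_image_of_injective _ hinj, Finset.card_univ]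
        omega

end Multigraph

namespace Multigraph

theorem local_eq {W B : Type*} [Fintype W] (X : Multigraph W B) (U : Finset W) (c : W)
    (K St H : Finset B) (en : B → W) (r : B) (hr : r ∈ St)
    (hK1 : ∀ e ∈ K, ∃ u ∈ U, ∃ v ∈ U, u ≠ v ∧ X.inc e = s(u, v))
    (hK2 : ∀ u ∈ U, ∀ v ∈ U, u ≠ v → ∃! e, e ∈ K ∧ X.inc e = s(u, v))
    (hc : c ∉ U) (hSt : ∀ e ∈ St, X.inc e = s(en e, c)) (hen : Set.BijOn en St U)
    (hKSt : Disjoint K St) (hHK : Disjoint H K) (hHS : Disjoint H St)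
    (hHc : ∀ e ∈ H, c ∉ X.inc e) :
    (U.card : ℚ) ^ 2 * ((K.powerset.filter (fun F => X.Tr (H ∪ insert r F))).card : ℚ) =
      ∑ Q ∈ St.powerset, if X.Tr (H ∪ Q) then (U.card : ℚ) ^ Q.card else 0 := by
  obtain ⟨ι, _, p, hp, hH⟩ : ∃ (ι : Type _) (_ : Fintype ι) (p : W → ι),
      Function.Surjective p ∧ ∀ x y, X.Reach H x y ↔ p x = p y :=
    ⟨Quotient (X.contractSetoid (H : Set B)), Fintype.ofFinite _, Quotient.mk _,
      Quotient.mk_surjective, fun x y => ⟨fun h => Quotient.sound h, fun h => Quotient.exact h⟩⟩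
  have hpc : ∀ x, p x = p c → x = c := by
    intro x hx
    have := X.reach_eq _ (fun z => z = c) ?_ ((hH x c).2 hx)
    · have h9 : (x = c) := by rw [this]
      exact h9
    · intro e he a b hab
      have := hHc e he
      rw [hab, Sym2.mem_iff] at this
      simp only [eq_iff_iff]
      grind
  have hrd : ∀ F ∈ K.powerset, Disjoint H (insert r F) := by
    intro F hF
    rw [Finset.disjoint_insert_right]
    refine ⟨Finset.disjoint_right.1 hHS hr, ?_⟩
    exact Finset.disjoint_of_subset_right (Finset.mem_powerset.1 hF) hHK
  have hSd : ∀ Q ∈ St.powerset, Disjoint H Q := fun Q hQ =>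
    Finset.disjoint_of_subset_right (Finset.mem_powerset.1 hQ) hHS
  by_cases hf : H.card + Fintype.card ι = Fintype.card W
  · have h1 : ∀ F, Disjoint H F → (X.Tr (H ∪ F) ↔ (X.push p).Tr F) := by
      intro F hF
      rw [X.tr_push p hp H F hF hH]
      simp only [hf, true_and]
    have hpe : ∀ e ∈ St, p (en e) ≠ p c := by
      intro e he h
      have := hpc _ h
      apply hc
      rw [← this]
      exact hen.1 he
    have hne := hpe r hr
    have hcard : Fintype.card {x // x ≠ p c} + 1 = Fintype.card ι := by
      have := Fintype.card_pos_iff.2 ⟨p c⟩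
      simp [Fintype.card_subtype_compl]
      omega
    obtain ⟨m, hm⟩ : ∃ m, Fintype.card {x // x ≠ p c} = m + 1 := by
      refine Nat.exists_eq_succ_of_ne_zero ?_
      have := Fintype.card_pos_iff.2 ⟨(⟨p (en r), hne⟩ : {x // x ≠ p c})⟩
      omega
    have h2 : K.powerset.filter (fun F => X.Tr (H ∪ insert r F)) =
        K.powerset.filter (fun F => (X.push (mrg hne ∘ p)).Tr F) := by
      refine Finset.filter_congr ?_
      intro F hF
      rw [h1 _ (hrd F hF), ← push_push]
      refine (X.push p).tr_mrg r _ _ hne ?_ F ?_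
      · simp [push, hSt r hr]
      · intro h
        exact Finset.disjoint_left.1 hKSt (Finset.mem_powerset.1 hF h) hr
    rw [h2, X.pitman U K hK1 hK2 m _ (mrg hne ∘ p) hm, ← Finset.sum_filter]
    have h3 : St.powerset.filter (fun Q => X.Tr (H ∪ Q)) =
        St.powerset.filter (fun Q => (X.push p).Tr Q) :=
      Finset.filter_congr (fun Q hQ => h1 Q (hSd Q hQ))
    have h4 : ∀ Q ∈ St.powerset.filter (fun Q => (X.push p).Tr Q),
        (U.card : ℚ) ^ Q.card = (U.card : ℚ) ^ (m + 1) := by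
      intro Q hQ
      have := (Finset.mem_filter.1 hQ).2.2
      congr 1
      omega
    rw [h3, Finset.sum_congr rfl h4, Finset.sum_const, X.star_count St en c hSt p hpe,
      nsmul_eq_mul, mul_comm]
    congr 1
    rw [Nat.cast_prod]
    refine Finset.prod_congr rfl ?_
    rintro ⟨i, hi⟩ _
    congr 1
    symm
    refine Finset.card_bij (fun e _ => en e) ?_ ?_ ?_
    · intro e he
      simp only [Finset.mem_filter] at he ⊢
      refine ⟨hen.1 he.1, ?_⟩
      apply Subtype.ext
      simp [mrg, he.2, hi]
    · intro e he f hf h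
      exact hen.2.1 (Finset.mem_filter.1 he).1 (Finset.mem_filter.1 hf).1 h
    · intro u hu
      simp only [Finset.mem_filter] at hu
      obtain ⟨e, he, rfl⟩ := hen.2.2 hu.1
      refine ⟨e, ?_, rfl⟩
      rw [Finset.mem_filter]
      refine ⟨he, ?_⟩
      have := congrArg Subtype.val hu.2
      simpa [mrg, hpe e he] using this
  · have h1 : ∀ F, Disjoint H F → ¬ X.Tr (H ∪ F) := by
      intro F hF h
      exact hf ((X.tr_push p hp H F hF hH).1 h).1
    rw [Finset.filter_false_of_mem (fun F hF => h1 _ (hrd F hF)),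
      Finset.sum_eq_zero (fun Q hQ => if_neg (h1 _ (hSd Q hQ)))]
    simp

end Multigraph

theorem sum_split {B : Type*} [Fintype B] (A : Finset B) (g : Finset B → ℚ) :
    ∑ S, g S = ∑ H ∈ Aᶜ.powerset, ∑ F ∈ A.powerset, g (H ∪ F) := by
  rw [← Finset.sum_product']
  symm
  refine Finset.sum_nbij' (fun x => x.1 ∪ x.2) (fun S => (S \ A, S ∩ A)) ?_ ?_ ?_ ?_ ?_
  · simp
  · intro S _
    simp only [Finset.mem_product, Finset.mem_powerset]
    refine ⟨?_, Finset.inter_subset_right⟩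
    intro x hx
    simp only [Finset.mem_sdiff, Finset.mem_compl] at hx ⊢
    exact hx.2
  · rintro ⟨H, F⟩ hx
    simp only [Finset.mem_product, Finset.mem_powerset] at hx
    have h1 : ∀ x ∈ H, x ∉ A := fun x h => by simpa using hx.1 h
    have h2 : ∀ x ∈ F, x ∈ A := fun x h => hx.2 h
    ext x <;> simp <;> grind
  · intro S _
    ext x; simp; tauto
  · simp

/-- exchanging weights one index at a time -/
theorem exchange {B κ : Type*} [Fintype B] [Fintype κ] (lab : B → Option κ)
    (Φ : Finset B → ℚ) (a b : κ → Finset B → ℚ)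
    (h : ∀ i, ∀ H : Finset B, (∀ e ∈ H, lab e ≠ some i) →
      ∑ F ∈ (Finset.univ.filter (fun e => lab e = some i)).powerset, a i F * Φ (H ∪ F) =
      ∑ F ∈ (Finset.univ.filter (fun e => lab e = some i)).powerset, b i F * Φ (H ∪ F)) :
    ∑ S, Φ S * ∏ i, a i (S.filter (fun e => lab e = some i)) =
    ∑ S, Φ S * ∏ i, b i (S.filter (fun e => lab e = some i)) := by
  have key : ∀ I : Finset κ, ∑ S, Φ S * ∏ i, a i (S.filter (fun e => lab e = some i)) =
    ∑ S, Φ S * ∏ i, (if i ∈ I then b i else a i) (S.filter (fun e => lab e = some i)) := by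
    intro I
    induction I using Finset.induction_on with
    | empty => simp
    | insert j I hj ih =>
      rw [ih]
      set A := Finset.univ.filter (fun e => lab e = some j) with hA
      rw [sum_split A, sum_split A]
      refine Finset.sum_congr rfl ?_
      intro H hH
      have hH' : ∀ e ∈ H, lab e ≠ some j := by
        intro e he
        have := Finset.mem_powerset.1 hH he
        simpa [hA] using this
      have hfj : ∀ F ∈ A.powerset, (H ∪ F).filter (fun e => lab e = some j) = F := by
        intro F hF
        have : ∀ e ∈ F, lab e = some j := by
          intro e he
          have := Finset.mem_powerset.1 hF he
          simpa [hA] using this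
        ext e
        simp only [Finset.mem_filter, Finset.mem_union]
        grind
      have hfi : ∀ F ∈ A.powerset, ∀ i, i ≠ j → (H ∪ F).filter (fun e => lab e = some i) =
          H.filter (fun e => lab e = some i) := by
        intro F hF i hi
        have : ∀ e ∈ F, lab e = some j := by
          intro e he
          have := Finset.mem_powerset.1 hF he
          simpa [hA] using this
        ext e
        simp only [Finset.mem_filter, Finset.mem_union]
        grind
      have hsp : ∀ (w : κ → Finset B → ℚ), ∀ F ∈ A.powerset,
          Φ (H ∪ F) * ∏ i, w i ((H ∪ F).filter (fun e => lab e = some i)) =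
          (∏ i ∈ Finset.univ.erase j, w i (H.filter (fun e => lab e = some i))) *
            (w j F * Φ (H ∪ F)) := by
        intro w F hF
        rw [← Finset.mul_prod_erase Finset.univ _ (Finset.mem_univ j), hfj F hF]
        rw [Finset.prod_congr rfl (fun i hi => by rw [hfi F hF i (Finset.ne_of_mem_erase hi)])]
        ring
      rw [Finset.sum_congr rfl (hsp (fun i => if i ∈ I then b i else a i)),
        Finset.sum_congr rfl (hsp (fun i => if i ∈ insert j I then b i else a i)),
        ← Finset.mul_sum, ← Finset.mul_sum]
      congr 1
      · refine Finset.prod_congr rfl ?_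
        intro i hi
        have := Finset.ne_of_mem_erase hi
        simp [this]
      · simp only [hj, if_false, Finset.mem_insert_self, if_true]
        exact h j H hH'
  have := key Finset.univ
  simpa using this

namespace Multigraph

theorem tr_map {W A B : Type*} [Fintype W] (X : Multigraph W A) (Y : Multigraph W B) (f : A ↪ B)
    (T : Finset A) (h : ∀ e ∈ T, Y.inc (f e) = X.inc e) : Y.Tr (T.map f) ↔ X.Tr T := by
  unfold Tr
  rw [Finset.card_map]
  refine and_congr ?_ Iff.rfl
  constructor
  · intro hc x y
    refine Y.reach_lift X _ _ id ?_ (hc x y)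
    intro e he u v huv
    simp only [Finset.coe_map, Set.mem_image, Finset.mem_coe] at he
    obtain ⟨e, he, rfl⟩ := he
    exact X.reach_edge he (by rw [← h e he, huv]; rfl)
  · intro hc x y
    refine X.reach_lift Y _ _ id ?_ (hc x y)
    intro e he u v huv
    exact Y.reach_edge (e := f e) (by simpa using he) (by rw [h e he, huv]; rfl)

theorem tr_push' {W ι : Type*} [Fintype W] [Fintype ι] {A : Type*} (X : Multigraph W A)
    (p : W → ι) (S H F : Finset A) (hS : ∀ e, e ∈ S ↔ e ∈ H ∨ e ∈ F)
    (hp : Function.Surjective p) (hd : Disjoint H F)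
    (hH : ∀ x y, X.Reach H x y ↔ p x = p y) :
    X.Tr S ↔ H.card + Fintype.card ι = Fintype.card W ∧ (X.push p).Tr F := by
  rw [← X.tr_push p hp H F hd hH]
  have : S = H ∪ F := by ext e; rw [hS, Finset.mem_union]
  rw [this]

/-- the graph with cliques replaced by stars -/
def starG {V κ μ : Type*} (part : V → κ) (a b : μ → V) : Multigraph (V ⊕ κ) (μ ⊕ V) :=
  ⟨Sum.elim (fun e => s(Sum.inl (a e), Sum.inl (b e))) (fun v => s(Sum.inl v, Sum.inr (part v)))⟩

theorem starG_core {V κ μ : Type*} [Fintype V] [Fintype κ] [Fintype μ] (part : V → κ)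
    (a b : μ → V) (ha : Function.Injective a) (hb : Function.Injective b)
    (hab : ∀ e f, a e ≠ b f) (Gs : Multigraph κ μ)
    (hGs : ∀ e, Gs.inc e = s(part (a e), part (b e))) (T t : Finset μ) (ht : t ⊆ Tᶜ) :
    (starG part a b).Tr (Finset.univ.disjSum (t.image a ∪ (Tᶜ \ t).image b)ᶜ) ↔ Gs.Tr T := by
  set R := t.image a ∪ (Tᶜ \ t).image b with hR
  have haR : ∀ e, a e ∈ R ↔ e ∈ t := by
    intro e
    simp only [hR, Finset.mem_union, Finset.mem_image]
    constructor
    · rintro (⟨f, hf, h⟩ | ⟨f, hf, h⟩)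
      · rwa [← ha h]
      · exact absurd h.symm (hab _ _)
    · intro h; exact Or.inl ⟨e, h, rfl⟩
  have hbR : ∀ e, b e ∈ R ↔ e ∈ Tᶜ \ t := by
    intro e
    simp only [hR, Finset.mem_union, Finset.mem_image]
    constructor
    · rintro (⟨f, hf, h⟩ | ⟨f, hf, h⟩)
      · exact absurd h (hab _ _)
      · rwa [← hb h]
    · intro h; exact Or.inr ⟨e, h, rfl⟩
  have hcard : R.card = Tᶜ.card := by
    rw [hR, Finset.card_union_of_disjoint, Finset.card_image_of_injective _ ha,
      Finset.card_image_of_injective _ hb, Finset.card_sdiff_of_subset ht]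
    · have := Finset.card_le_card ht
      omega
    · rw [Finset.disjoint_left]
      intro v hv hv'
      simp only [Finset.mem_image] at hv hv'
      obtain ⟨e, _, rfl⟩ := hv
      obtain ⟨f, _, h⟩ := hv'
      exact hab _ _ h.symm
  obtain ⟨q, hq⟩ : ∃ q : V → κ, ∀ v, (v ∉ R → q v = part v) ∧
      (∀ e ∈ t, v = a e → q v = part (b e)) ∧ (∀ e ∈ Tᶜ \ t, v = b e → q v = part (a e)) := by
    suffices hs : ∀ v, ∃ i, (v ∉ R → i = part v) ∧
        (∀ e ∈ t, v = a e → i = part (b e)) ∧ (∀ e ∈ Tᶜ \ t, v = b e → i = part (a e)) by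
      choose q hq using hs
      exact ⟨q, hq⟩
    intro v
    by_cases hv : v ∈ R
    · have hv' := hv
      simp only [hR, Finset.mem_union, Finset.mem_image] at hv'
      rcases hv' with ⟨e, he, rfl⟩ | ⟨e, he, rfl⟩
      · refine ⟨part (b e), fun h => absurd hv h, ?_, ?_⟩
        · intro f hf h; rw [ha h]
        · intro f hf h; exact absurd h (hab _ _)
      · refine ⟨part (a e), fun h => absurd hv h, ?_, ?_⟩
        · intro f hf h; exact absurd h.symm (hab _ _)
        · intro f hf h; rw [hb h]
    · refine ⟨part v, fun _ => rfl, ?_, ?_⟩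
      · rintro e he rfl
        exact absurd ((haR e).2 he) hv
      · rintro e he rfl
        exact absurd ((hbR e).2 he) hv
  let p : V ⊕ κ → κ := Sum.elim q id
  have hsplit : ∀ e, e ∈ (Finset.univ.disjSum Rᶜ : Finset (μ ⊕ V)) ↔
      e ∈ Tᶜ.disjSum Rᶜ ∨ e ∈ T.map Function.Embedding.inl := by
    rintro (e | v)
    · simp; tauto
    · simp
  rw [(starG part a b).tr_push' p _ _ _ hsplit]
  · have h1 : (Tᶜ.disjSum Rᶜ).card + Fintype.card κ = Fintype.card (V ⊕ κ) := by
      rw [Finset.card_disjSum, ← hcard, Finset.card_compl, Fintype.card_sum]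
      have := Finset.card_le_univ R
      omega
    simp only [h1, true_and]
    refine tr_map Gs _ _ T ?_
    intro e he
    have h2 : q (a e) = part (a e) := by
      refine (hq _).1 ?_
      rw [haR]
      intro h
      have := ht h
      simp at this
      exact this he
    have h3 : q (b e) = part (b e) := by
      refine (hq _).1 ?_
      rw [hbR]
      simp [he]
    simp [push, starG, p, h2, h3, hGs]
  · intro i
    exact ⟨Sum.inr i, rfl⟩
  · rw [Finset.disjoint_left]
    rintro (e | v) <;> simp
  · have key : ∀ x, (starG part a b).Reach (Tᶜ.disjSum Rᶜ : Finset (μ ⊕ V)) x (Sum.inr (p x)) := by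
      have hv : ∀ v, v ∉ R → (starG part a b).Reach (Tᶜ.disjSum Rᶜ : Finset (μ ⊕ V))
          (Sum.inl v) (Sum.inr (part v)) := by
        intro v hv
        exact reach_edge _ (e := Sum.inr v) (by simpa using hv) rfl
      have he : ∀ e, e ∉ T → (starG part a b).Reach (Tᶜ.disjSum Rᶜ : Finset (μ ⊕ V))
          (Sum.inl (a e)) (Sum.inl (b e)) := by
        intro e he
        exact reach_edge _ (e := Sum.inl e) (by simpa using he) rfl
      rintro (v | i)
      · change (starG part a b).Reach _ (Sum.inl v) (Sum.inr (q v))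
        by_cases hvR : v ∈ R
        · have hv' := hvR
          simp only [hR, Finset.mem_union, Finset.mem_image] at hv'
          rcases hv' with ⟨e, het, rfl⟩ | ⟨e, het, rfl⟩
          · rw [(hq _).2.1 e het rfl]
            have h1 : e ∉ T := by simpa using ht het
            refine (he e h1).trans (hv _ ?_)
            rw [hbR]; simp [het]
          · rw [(hq _).2.2 e het rfl]
            simp only [Finset.mem_sdiff, Finset.mem_compl] at het
            refine (reach_symm _ _ (he e het.1)).trans (hv _ ?_)
            rw [haR]; exact het.2
        · rw [(hq v).1 hvR]
          exact hv v hvR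
      · exact Relation.ReflTransGen.refl
    intro x y
    constructor
    · intro h
      refine reach_eq _ _ p ?_ h
      rintro (e | v) hf x y hxy
      · simp only [starG, Sum.elim_inl, Sym2.eq_iff] at hxy
        have heT : e ∉ T := by simpa using hf
        have : q (a e) = q (b e) := by
          by_cases het : e ∈ t
          · rw [(hq _).2.1 e het rfl, (hq _).1]
            rw [hbR]; simp [het]
          · rw [(hq (b e)).2.2 e (by simp [het, heT]) rfl, (hq _).1]
            rw [haR]; exact het
        rcases hxy with ⟨rfl, rfl⟩ | ⟨rfl, rfl⟩
        · exact this
        · exact this.symm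
      · simp only [starG, Sum.elim_inr, Sym2.eq_iff] at hxy
        have hvR : v ∉ R := by simpa using hf
        have : q v = part v := (hq v).1 hvR
        rcases hxy with ⟨rfl, rfl⟩ | ⟨rfl, rfl⟩
        · exact this
        · exact this.symm
    · intro h
      refine (key x).trans ?_
      rw [h]
      exact reach_symm _ _ (key y)

theorem starG_conn {V κ μ : Type*} [Fintype V] [Fintype κ] [Fintype μ] (part : V → κ)
    (a b : μ → V) (ha : Function.Injective a) (hb : Function.Injective b)
    (hab : ∀ e f, a e ≠ b f) (R : Finset V)
    (h : (starG part a b).Tr (Finset.univ.disjSum Rᶜ)) :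
    (∀ v ∈ R, ∃ e, a e = v ∨ b e = v) ∧ ∀ e, ¬ (a e ∈ R ∧ b e ∈ R) := by
  constructor
  · intro v hv
    by_contra hcon
    push Not at hcon
    have := reach_eq _ _ (fun x => x = Sum.inl v) ?_ (h.1 (Sum.inl v) (Sum.inr (part v)))
    · simp at this
    · rintro (e | w) hf x y hxy
      · simp only [starG, Sum.elim_inl, Sym2.eq_iff] at hxy
        have := hcon e
        rcases hxy with ⟨rfl, rfl⟩ | ⟨rfl, rfl⟩ <;> simp [this]
      · simp only [starG, Sum.elim_inr, Sym2.eq_iff] at hxy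
        have hw : w ∉ R := by simpa using hf
        have : w ≠ v := fun h => hw (h ▸ hv)
        rcases hxy with ⟨rfl, rfl⟩ | ⟨rfl, rfl⟩ <;> simp [this]
  · rintro e ⟨h1, h2⟩
    have := reach_eq _ _ (fun x => x = Sum.inl (a e) ∨ x = Sum.inl (b e)) ?_
      (h.1 (Sum.inl (a e)) (Sum.inr (part (a e))))
    · simp at this
    · rintro (f | w) hf x y hxy
      · simp only [starG, Sum.elim_inl, Sym2.eq_iff] at hxy
        have h3 := hab f e
        have h4 := hab e f
        have h5 : a f = a e ↔ b f = b e := by rw [ha.eq_iff, hb.eq_iff]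
        rcases hxy with ⟨rfl, rfl⟩ | ⟨rfl, rfl⟩ <;> simp [h3, h5, h4.symm]
      · simp only [starG, Sum.elim_inr, Sym2.eq_iff] at hxy
        have hw : w ∉ R := by simpa using hf
        have h3 : w ≠ a e := fun h => hw (h ▸ h1)
        have h4 : w ≠ b e := fun h => hw (h ▸ h2)
        rcases hxy with ⟨rfl, rfl⟩ | ⟨rfl, rfl⟩ <;> simp [h3, h4]

theorem endB {V κ μ : Type*} [Fintype V] [Fintype κ] [Fintype μ] (part : V → κ)
    (a b : μ → V) (ha : Function.Injective a) (hb : Function.Injective b)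
    (hab : ∀ e f, a e ≠ b f) (Gs : Multigraph κ μ)
    (hGs : ∀ e, Gs.inc e = s(part (a e), part (b e))) (y : V → ℚ) :
    ∑ R : Finset V, (if (starG part a b).Tr (Finset.univ.disjSum Rᶜ) then ∏ v ∈ R, y v else 0) =
    ∑ T : Finset μ, if Gs.Tr T then ∏ e ∈ Tᶜ, (y (a e) + y (b e)) else 0 := by
  simp only [Finset.prod_add]
  rw [← Finset.sum_filter, ← Finset.sum_filter, Finset.sum_sigma']
  have haR : ∀ T t : Finset μ, ∀ e, a e ∈ t.image a ∪ (Tᶜ \ t).image b ↔ e ∈ t := by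
    intro T t e
    simp only [Finset.mem_union, Finset.mem_image]
    constructor
    · rintro (⟨f, hf, h⟩ | ⟨f, hf, h⟩)
      · rwa [← ha h]
      · exact absurd h.symm (hab _ _)
    · intro h; exact Or.inl ⟨e, h, rfl⟩
  have hbR : ∀ T t : Finset μ, ∀ e, b e ∈ t.image a ∪ (Tᶜ \ t).image b ↔ e ∈ Tᶜ \ t := by
    intro T t e
    simp only [Finset.mem_union, Finset.mem_image]
    constructor
    · rintro (⟨f, hf, h⟩ | ⟨f, hf, h⟩)
      · exact absurd h (hab _ _)
      · rwa [← hb h]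
    · intro h; exact Or.inr ⟨e, h, rfl⟩
  let TT : Finset V → Finset μ := fun R => Finset.univ.filter (fun e => a e ∉ R ∧ b e ∉ R)
  let tt : Finset V → Finset μ := fun R => Finset.univ.filter (fun e => a e ∈ R)
  have htT : ∀ R, tt R ⊆ (TT R)ᶜ := by
    intro R e he
    simp only [tt, TT, Finset.mem_filter, Finset.mem_compl, Finset.mem_univ, true_and] at he ⊢
    tauto
  have hinv : ∀ R, (starG part a b).Tr (Finset.univ.disjSum Rᶜ) →
      (tt R).image a ∪ ((TT R)ᶜ \ tt R).image b = R := by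
    intro R hR
    obtain ⟨h1, h2⟩ := starG_conn part a b ha hb hab R hR
    ext v
    simp only [Finset.mem_union, Finset.mem_image, Finset.mem_sdiff, Finset.mem_compl,
      tt, TT, Finset.mem_filter, Finset.mem_univ, true_and]
    constructor
    · rintro (⟨e, he, rfl⟩ | ⟨e, he, rfl⟩)
      · exact he
      · tauto
    · intro hv
      obtain ⟨e, rfl | rfl⟩ := h1 v hv
      · exact Or.inl ⟨e, hv, rfl⟩
      · refine Or.inr ⟨e, ?_, rfl⟩
        have := h2 e
        tauto
  symm
  refine Finset.sum_bij' (fun x _ => x.2.image a ∪ (x.1ᶜ \ x.2).image b)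
    (fun R _ => ⟨TT R, tt R⟩) ?_ ?_ ?_ ?_ ?_
  · rintro ⟨T, t⟩ hx
    simp only [Finset.mem_sigma, Finset.mem_filter, Finset.mem_univ, true_and,
      Finset.mem_powerset] at hx ⊢
    exact (starG_core part a b ha hb hab Gs hGs T t hx.2).2 hx.1
  · intro R hR
    simp only [Finset.mem_sigma, Finset.mem_filter, Finset.mem_univ, true_and,
      Finset.mem_powerset] at hR ⊢
    refine ⟨?_, htT R⟩
    rw [← starG_core part a b ha hb hab Gs hGs (TT R) (tt R) (htT R), hinv R hR]
    exact hR
  · rintro ⟨T, t⟩ hx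
    simp only [Finset.mem_sigma, Finset.mem_filter, Finset.mem_univ, true_and,
      Finset.mem_powerset] at hx
    have h1 : tt (t.image a ∪ (Tᶜ \ t).image b) = t := by
      ext e
      simp only [tt, Finset.mem_filter, Finset.mem_univ, true_and, haR]
    have h2 : TT (t.image a ∪ (Tᶜ \ t).image b) = T := by
      ext e
      simp only [TT, Finset.mem_filter, Finset.mem_univ, true_and, haR, hbR]
      have := @hx.2 e
      simp only [Finset.mem_sdiff, Finset.mem_compl] at this ⊢
      tauto
    simp only [h1, h2]
  · intro R hR
    simp only [Finset.mem_filter, Finset.mem_univ, true_and] at hR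
    exact hinv R hR
  · rintro ⟨T, t⟩ hx
    simp only
    rw [Finset.prod_union, Finset.prod_image (fun x _ y _ h => ha h),
      Finset.prod_image (fun x _ y _ h => hb h)]
    rw [Finset.disjoint_left]
    intro v hv hv'
    simp only [Finset.mem_image] at hv hv'
    obtain ⟨e, _, rfl⟩ := hv
    obtain ⟨f, _, h⟩ := hv'
    exact hab _ _ h.symm

end Multigraph

/-- indicator -/
noncomputable def ind (P : Prop) : ℚ := if P then 1 else 0

theorem ind_pos {P : Prop} (h : P) : ind P = 1 := if_pos h

theorem ind_neg {P : Prop} (h : ¬ P) : ind P = 0 := if_neg h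

theorem ind_and (P Q : Prop) : ind (P ∧ Q) = ind P * ind Q := by
  unfold ind; split_ifs <;> simp_all

theorem ind_forall {κ : Type*} [Fintype κ] (P : κ → Prop) : ∏ i, ind (P i) = ind (∀ i, P i) := by
  by_cases h : ∀ i, P i
  · rw [ind_pos h]; exact Finset.prod_eq_one (fun i _ => ind_pos (h i))
  · rw [ind_neg h]
    push Not at h
    obtain ⟨i, hi⟩ := h
    exact Finset.prod_eq_zero (Finset.mem_univ i) (ind_neg hi)

theorem sum_ind {α : Type*} [Fintype α] (P : α → Prop) : ∑ x, ind (P x) = ({x | P x}.ncard : ℚ) := by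
  unfold ind
  rw [Finset.sum_boole, Set.ncard_eq_toFinset_card']
  congr 2
  ext; simp

theorem sum_ind_finset {α : Type*} (s : Finset α) (P : α → Prop) :
    ∑ x ∈ s, ind (P x) = ((s.filter P).card : ℚ) := by
  unfold ind
  rw [Finset.sum_boole]

namespace Multigraph

theorem local_hyp {W B : Type*} [Fintype W] [Fintype B] (X : Multigraph W B) (U : Finset W) (c : W)
    (A H : Finset B) (Rt : B → Prop) (en : B → W) (r : B) (hrA : r ∈ A) (hrR : Rt r)
    (hK1 : ∀ e ∈ A, ¬ Rt e → ∃ u ∈ U, ∃ v ∈ U, u ≠ v ∧ X.inc e = s(u, v))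
    (hK2 : ∀ u ∈ U, ∀ v ∈ U, u ≠ v → ∃! e, (e ∈ A ∧ ¬ Rt e) ∧ X.inc e = s(u, v))
    (hc : c ∉ U) (hSt : ∀ e ∈ A, Rt e → X.inc e = s(en e, c))
    (hen : Set.BijOn en {e | e ∈ A ∧ Rt e} U)
    (hHA : Disjoint H A) (hHc : ∀ e ∈ H, c ∉ X.inc e) (Mr : B → Prop) (hM : ∀ e ∈ A, ¬ Mr e) :
    ∑ F ∈ A.powerset, ((U.card : ℚ) ^ 2 * ind (∀ e, (e ∈ F ∧ Rt e) ↔ e = r)) *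
      ind (X.Tr (H ∪ F) ∧ ∀ e, Mr e → e ∈ H ∪ F) =
    ∑ F ∈ A.powerset, ((U.card : ℚ) ^ F.card * ind (∀ e ∈ F, Rt e)) *
      ind (X.Tr (H ∪ F) ∧ ∀ e, Mr e → e ∈ H ∪ F) := by
  have hMH : ∀ F ∈ A.powerset, ((∀ e, Mr e → e ∈ H ∪ F) ↔ (∀ e, Mr e → e ∈ H)) := by
    intro F hF
    rw [Finset.mem_powerset] at hF
    constructor
    · intro h e he
      rcases Finset.mem_union.1 (h e he) with h1 | h1
      · exact h1
      · exact absurd he (hM e (hF h1))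
    · intro h e he
      exact Finset.mem_union_left _ (h e he)
  have hΦ : ∀ F ∈ A.powerset, ind (X.Tr (H ∪ F) ∧ ∀ e, Mr e → e ∈ H ∪ F) =
      ind (X.Tr (H ∪ F)) * ind (∀ e, Mr e → e ∈ H) := by
    intro F hF
    rw [hMH F hF, ind_and]
  have hΦ' : ∀ w : Finset B → ℚ,
      ∑ F ∈ A.powerset, w F * ind (X.Tr (H ∪ F) ∧ ∀ e, Mr e → e ∈ H ∪ F) =
      (∑ F ∈ A.powerset, w F * ind (X.Tr (H ∪ F))) * ind (∀ e, Mr e → e ∈ H) := by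
    intro w
    rw [Finset.sum_mul]
    refine Finset.sum_congr rfl (fun F hF => ?_)
    rw [hΦ F hF, mul_assoc]
  rw [hΦ' (fun F => (U.card : ℚ) ^ 2 * ind (∀ e, (e ∈ F ∧ Rt e) ↔ e = r)),
    hΦ' (fun F => (U.card : ℚ) ^ F.card * ind (∀ e ∈ F, Rt e))]
  congr 1
  have hsubK : A.filter (fun e => ¬ Rt e) ⊆ A := Finset.filter_subset _ _
  have hsubS : A.filter Rt ⊆ A := Finset.filter_subset _ _
  have key := X.local_eq U c (A.filter (fun e => ¬ Rt e)) (A.filter Rt) H en r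
    (by simp [hrA, hrR]) (by simpa using hK1) (by simpa using hK2) hc (by simpa using hSt)
    (by simpa using hen)
    (by
      rw [Finset.disjoint_left]; intro e h1 h2
      exact (Finset.mem_filter.1 h1).2 (Finset.mem_filter.1 h2).2)
    (Finset.disjoint_of_subset_right hsubK hHA) (Finset.disjoint_of_subset_right hsubS hHA) hHc
  trans (U.card : ℚ) ^ 2 * (((A.filter (fun e => ¬ Rt e)).powerset.filter
    (fun F => X.Tr (H ∪ insert r F))).card : ℚ)
  · simp only [mul_assoc]
    rw [← Finset.mul_sum]
    congr 1
    simp only [← ind_and]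
    rw [sum_ind_finset]
    congr 1
    refine Finset.card_nbij' (fun F => F.erase r) (fun F => insert r F) ?_ ?_ ?_ ?_
    · intro F hF
      simp only [Finset.coe_filter, Finset.mem_powerset, Set.mem_setOf_eq] at hF ⊢
      obtain ⟨h1, h2, h3⟩ := hF
      have hrF : r ∈ F := ((h2 r).2 rfl).1
      refine ⟨?_, ?_⟩
      · intro e he
        simp only [Finset.mem_erase, Finset.mem_filter] at he ⊢
        refine ⟨h1 he.2, fun h => he.1 ((h2 e).1 ⟨he.2, h⟩)⟩
      · rwa [Finset.insert_erase hrF]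
    · intro F hF
      simp only [Finset.coe_filter, Finset.mem_powerset, Set.mem_setOf_eq] at hF ⊢
      obtain ⟨h1, h2⟩ := hF
      refine ⟨Finset.insert_subset hrA (h1.trans hsubK), ?_, h2⟩
      intro e
      rw [Finset.mem_insert]
      constructor
      · rintro ⟨h | h, h'⟩
        · exact h
        · exact absurd h' (Finset.mem_filter.1 (h1 h)).2
      · rintro rfl; exact ⟨Or.inl rfl, hrR⟩
    · intro F hF
      simp only [Finset.coe_filter, Finset.mem_powerset, Set.mem_setOf_eq] at hF ⊢
      exact Finset.insert_erase ((hF.2.1 r).2 rfl).1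
    · intro F hF
      simp only [Finset.coe_filter, Finset.mem_powerset, Set.mem_setOf_eq] at hF ⊢
      refine Finset.erase_insert ?_
      intro h
      exact (Finset.mem_filter.1 (hF.1 h)).2 hrR
  · rw [key]
    refine Finset.sum_subset_zero_on_sdiff (Finset.powerset_mono.2 hsubS) ?_ ?_
    · intro F hF
      simp only [Finset.mem_sdiff, Finset.mem_powerset] at hF
      rw [ind_neg (P := ∀ e ∈ F, Rt e)]
      · simp
      · intro h
        exact hF.2 (fun e he => Finset.mem_filter.2 ⟨hF.1 he, h e he⟩)
    · intro F hF
      rw [Finset.mem_powerset] at hF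
      rw [ind_pos (P := ∀ e ∈ F, Rt e) (fun e he => (Finset.mem_filter.1 (hF he)).2)]
      unfold ind
      simp

end Multigraph

namespace Multigraph

/-- add a star centre to every clique -/
def bigG {V E κ : Type*} (G : Multigraph V E) (part : V → κ) : Multigraph (V ⊕ κ) (E ⊕ V) :=
  ⟨Sum.elim (fun e => (G.inc e).map Sum.inl) (fun v => s(Sum.inl v, Sum.inr (part v)))⟩

theorem bigG_tr {V E κ : Type*} [Fintype V] [Fintype κ] (G : Multigraph V E) (part : V → κ)
    (r : κ → V) (hr : ∀ i, part (r i) = i) (S : Finset (E ⊕ V))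
    (hS : ∀ v, Sum.inr v ∈ S ↔ v = r (part v)) :
    (G.bigG part).Tr S ↔ G.Tr S.toLeft := by
  have hri : Function.Injective r := fun i j h => by rw [← hr i, ← hr j, h]
  set X := G.bigG part with hX
  have hinr : ∀ v, X.inc (Sum.inr v) = s(Sum.inl v, Sum.inr (part v)) := fun v => rfl
  have hinl : ∀ e, X.inc (Sum.inl e) = (G.inc e).map Sum.inl := fun v => rfl
  set H : Finset (E ⊕ V) := (Finset.univ.map ⟨r, hri⟩).map Function.Embedding.inr with hH
  have hmH : ∀ e, e ∈ H ↔ ∃ i, e = Sum.inr (r i) := by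
    intro e
    simp only [hH, Finset.mem_map, Finset.mem_univ, true_and, Function.Embedding.coeFn_mk,
      exists_exists_eq_and, Function.Embedding.inr_apply]
    constructor
    · rintro ⟨i, rfl⟩; exact ⟨i, rfl⟩
    · rintro ⟨i, rfl⟩; exact ⟨i, rfl⟩
  have hreach : ∀ x : V ⊕ κ, X.Reach H x (Sum.inl (Sum.elim id r x)) := by
    rintro (v | i)
    · exact Relation.ReflTransGen.refl
    · refine X.reach_edge (e := Sum.inr (r i)) ?_ ?_
      · exact (hmH _).2 ⟨i, rfl⟩
      · rw [hinr, hr]; exact Sym2.eq_swap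
  rw [X.tr_push' (Sum.elim id r) S H (S.toLeft.map Function.Embedding.inl)]
  · rw [tr_map G]
    · have : H.card + Fintype.card V = Fintype.card (V ⊕ κ) := by
        rw [hH, Finset.card_map, Finset.card_map, Fintype.card_sum, add_comm]; rfl
      simp only [this, true_and]
    · intro e _
      show Sym2.map _ (Sym2.map _ _) = _
      rw [Sym2.map_map]
      have : (Sum.elim id r ∘ Sum.inl : V → V) = id := rfl
      rw [this, Sym2.map_id]; rfl
  · rintro (e | v)
    · rw [hmH]; simp
    · rw [hmH, hS]
      simp only [Sum.inr.injEq, Finset.mem_map, Function.Embedding.inl_apply, reduceCtorEq,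
        and_false, exists_false, or_false]
      constructor
      · intro h; exact ⟨_, h⟩
      · rintro ⟨i, rfl⟩; rw [hr]
  · intro v; exact ⟨Sum.inl v, rfl⟩
  · rw [Finset.disjoint_left]
    intro e h1 h2
    obtain ⟨i, rfl⟩ := (hmH _).1 h1
    simp at h2
  · intro x y
    constructor
    · intro h
      refine X.reach_eq H (Sum.elim id r) ?_ h
      intro e he u v huv
      obtain ⟨i, rfl⟩ := (hmH _).1 he
      rw [hinr, hr, Sym2.eq_iff] at huv
      rcases huv with ⟨rfl, rfl⟩ | ⟨rfl, rfl⟩ <;> rfl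
    · intro h
      refine Relation.ReflTransGen.trans (hreach x) ?_
      rw [h]
      exact X.reach_symm _ (hreach y)

theorem endA {V E κ : Type*} [Fintype V] [Fintype E] [Fintype κ] (G : Multigraph V E)
    (part : V → κ) (r : κ → V) (hr : ∀ i, part (r i) = i) (M₀ : Set E)
    (lab : E ⊕ V → Option κ) (hlab : ∀ v, lab (Sum.inr v) = some (part v)) (n : κ → ℚ) :
    ∑ S : Finset (E ⊕ V), ind ((G.bigG part).Tr S ∧ ∀ e, (∃ f ∈ M₀, e = Sum.inl f) → e ∈ S) *
      ∏ i, (n i ^ 2 * ind (∀ e, (e ∈ S.filter (fun e => lab e = some i) ∧ e.isRight = true) ↔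
        e = Sum.inr (r i))) = (∏ i, n i ^ 2) * (G.tau M₀ : ℚ) := by
  simp only [Finset.prod_mul_distrib, ind_forall (fun i => ∀ e, _)]
  simp only [mul_left_comm]
  rw [← Finset.mul_sum]
  congr 1
  simp only [← ind_and]
  rw [sum_ind]
  congr 1
  have hcond : ∀ S : Finset (E ⊕ V), (∀ i e, (e ∈ S.filter (fun e => lab e = some i) ∧
      e.isRight = true) ↔ e = Sum.inr (r i)) ↔ ∀ v, Sum.inr v ∈ S ↔ v = r (part v) := by
    intro S
    constructor
    · intro h v
      have := h (part v) (Sum.inr v)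
      simpa [hlab] using this
    · intro h i e
      rcases e with e | v
      · simp
      · simp only [Finset.mem_filter, hlab, h, Sum.isRight_inr, and_true, Option.some.injEq,
          Sum.inr.injEq]
        constructor
        · rintro ⟨h1, rfl⟩; exact h1
        · rintro rfl; simp [hr]
  simp only [hcond]
  unfold tau
  refine Set.ncard_congr (fun S _ => {e | Sum.inl e ∈ S}) ?_ ?_ ?_
  · rintro S ⟨⟨h1, h2⟩, h3⟩
    rw [G.bigG_tr part r hr S h3, tr_iff] at h1
    refine ⟨?_, ?_⟩
    · convert h1 using 1
      ext e; simp
    · intro e he; exact h2 _ ⟨e, he, rfl⟩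
  · rintro S S' ⟨_, h3⟩ ⟨_, h3'⟩ h
    ext (e | v)
    · exact Set.ext_iff.1 h e
    · rw [h3, h3']
  · rintro T ⟨h1, h2⟩
    refine ⟨T.toFinset.disjSum (Finset.univ.filter (fun v => v = r (part v))), ?_, ?_⟩
    · have h3 : ∀ v, Sum.inr v ∈ (T.toFinset.disjSum
          (Finset.univ.filter (fun v => v = r (part v)))) ↔ v = r (part v) := by
        intro v; simp
      refine ⟨⟨?_, ?_⟩, h3⟩
      · rw [G.bigG_tr part r hr _ h3, tr_iff]
        simpa using h1
      · rintro _ ⟨f, hf, rfl⟩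
        simpa using h2 hf
    · ext e; simp

theorem endB' {V E κ : Type*} [Fintype V] [Fintype E] [Fintype κ] (G : Multigraph V E)
    (part : V → κ) (M₀ : Set E) (ends : E → V × V)
    (hends : ∀ e, G.inc e = s((ends e).1, (ends e).2))
    (lab : E ⊕ V → Option κ) (hlab : ∀ v, lab (Sum.inr v) = some (part v))
    (hlab0 : ∀ e ∈ M₀, lab (Sum.inl e) = none)
    (hlab1 : ∀ e, e ∉ M₀ → ∃ i, lab (Sum.inl e) = some i) (n : κ → ℚ) :
    ∑ S : Finset (E ⊕ V), ind ((G.bigG part).Tr S ∧ ∀ e, (∃ f ∈ M₀, e = Sum.inl f) → e ∈ S) *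
      ∏ i, (n i ^ (S.filter (fun e => lab e = some i)).card *
        ind (∀ e ∈ S.filter (fun e => lab e = some i), e.isRight = true)) =
    ∑ Q : Finset V, ind ((starG part (fun e : {e // e ∈ M₀} => (ends e.1).1)
      (fun e => (ends e.1).2)).Tr (Finset.univ.disjSum Q)) * ∏ v ∈ Q, n (part v) := by
  symm
  refine Finset.sum_of_injOn (fun Q => M₀.toFinset.disjSum Q) ?_ ?_ ?_ ?_
  · intro Q _ Q' _ h
    ext v
    have := Finset.ext_iff.1 h (Sum.inr v)
    simpa using this
  · intro Q _; exact Finset.mem_coe.2 (Finset.mem_univ _)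
  · intro S _ hS
    simp only [Finset.prod_mul_distrib, ind_forall (fun i => ∀ e ∈ _, _)]
    rw [mul_left_comm, ← ind_and, ind_neg, mul_zero]
    rintro ⟨⟨h1, h2⟩, h3⟩
    apply hS
    refine ⟨S.toRight, by simp, ?_⟩
    ext (e | v)
    · simp only [Finset.inl_mem_disjSum, Set.mem_toFinset]
      constructor
      · intro he; exact h2 _ ⟨e, he, rfl⟩
      · intro he
        by_contra hn
        obtain ⟨i, hi⟩ := hlab1 e hn
        have := h3 i (Sum.inl e) (Finset.mem_filter.2 ⟨he, hi⟩)
        simp at this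
    · simp
  · intro Q _
    simp only [Finset.prod_mul_distrib, ind_forall (fun i => ∀ e ∈ _, _)]
    have hfil : ∀ i, (M₀.toFinset.disjSum Q).filter (fun e => lab e = some i) =
        (Q.filter (fun v => part v = i)).map Function.Embedding.inr := by
      intro i
      ext (e | v)
      · simp only [Finset.mem_filter, Finset.inl_mem_disjSum, Set.mem_toFinset, Finset.mem_map,
          Function.Embedding.inr_apply, reduceCtorEq, and_false, exists_false, iff_false, not_and]
        intro he; rw [hlab0 e he]; simp
      · simp [hlab]
    simp only [hfil, Finset.card_map]
    rw [ind_pos (P := ∀ i, _), mul_one]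
    · congr 1
      · congr 1
        rw [eq_iff_iff]
        have hT : (G.bigG part).Tr (M₀.toFinset.disjSum Q) ↔ (starG part
            (fun e : {e // e ∈ M₀} => (ends e.1).1)
            (fun e => (ends e.1).2)).Tr (Finset.univ.disjSum Q) := by
          rw [← tr_map _ (G.bigG part) ((Function.Embedding.subtype (· ∈ M₀)).sumMap
            (Function.Embedding.refl V))]
          · have : (M₀.toFinset.disjSum Q) = (Finset.univ.disjSum Q).map
              ((Function.Embedding.subtype (· ∈ M₀)).sumMap (Function.Embedding.refl V)) := by
              ext (e | v) <;> simp
            rw [this]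
          · rintro (e | v) _
            · show Sym2.map _ (G.inc e.1) = _
              rw [hends]; rfl
            · rfl
        rw [← hT]
        constructor
        · intro h
          refine ⟨h, ?_⟩
          rintro _ ⟨f, hf, rfl⟩
          simpa using hf
        · exact fun h => h.1
      · rw [← Finset.prod_fiberwise Q part]
        refine Finset.prod_congr rfl (fun i _ => ?_)
        rw [Finset.prod_congr rfl (g := fun _ => n i), Finset.prod_const]
        intro v hv
        rw [(Finset.mem_filter.1 hv).2]
    · intro i e he
      obtain ⟨v, _, rfl⟩ := Finset.mem_map.1 he
      rfl

end Multigraph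

theorem main_aux {V : Type u} {E : Type v}
    [Fintype V] [Fintype E]
    (G : Multigraph V E) (hloop : G.Loopless)
    (k : ℕ) (part : V → Fin k)
    (hne : ∀ i, (part ⁻¹' {i}).Nonempty)
    (hclique : ∀ i, G.IsClique (part ⁻¹' {i}))
    (M₀ : Set E)
    (hM₀ : M₀ = ⋃ (i : Fin k), ⋃ (j : Fin k), ⋃ (_ : i < j),
      G.edgesBetween (part ⁻¹' {i}) (part ⁻¹' {j}))
    (hmatching : ∀ e ∈ M₀, ∀ f ∈ M₀, e ≠ f → ∀ v : V, v ∈ G.inc e → v ∉ G.inc f)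
    (ends : E → V × V) (hends : ∀ e, G.inc e = s((ends e).1, (ends e).2))
    (Gstar : Multigraph (Fin k) {e : E // e ∈ M₀})
    (hGstar : ∀ e : {e : E // e ∈ M₀}, Gstar.inc e = (G.inc e.val).map part) :
    (G.tau M₀ : ℚ) =
      (∏ i : Fin k, ((part ⁻¹' {i}).ncard : ℚ) ^ (((part ⁻¹' {i}).ncard : ℤ) - 2)) *
        ∑ᶠ T ∈ Gstar.ST ∅,
          ∏ᶠ e ∈ {f : {e : E // e ∈ M₀} | f ∉ T},
            ((((part ⁻¹' {part (ends e.val).1}).ncard : ℚ))⁻¹ +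
              (((part ⁻¹' {part (ends e.val).2}).ncard : ℚ))⁻¹) := by
  have hM : ∀ e, e ∈ M₀ ↔ part (ends e).1 ≠ part (ends e).2 := by
    intro e
    rw [hM₀]
    simp only [Set.mem_iUnion, edgesBetween, Set.mem_setOf_eq, hends, Set.mem_preimage,
      Set.mem_singleton_iff]
    constructor
    · rintro ⟨i, j, hij, u, v, h, rfl, rfl⟩
      rw [Sym2.eq_iff] at h
      rcases h with ⟨h1, h2⟩ | ⟨h1, h2⟩ <;> rw [h1, h2]
      · exact hij.ne
      · exact hij.ne'
    · intro h
      rcases lt_or_gt_of_ne h with h | h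
      · exact ⟨_, _, h, _, _, rfl, rfl, rfl⟩
      · exact ⟨_, _, h, _, _, Sym2.eq_swap, rfl, rfl⟩
  have hr : ∀ i, ∃ v, part v = i := fun i => hne i
  choose r hr using hr
  set n : Fin k → ℚ := fun i => ((part ⁻¹' {i}).ncard : ℚ) with hn
  have hn0 : ∀ i, n i ≠ 0 := by
    intro i
    simp only [hn]
    rw [Nat.cast_ne_zero]
    exact ((Set.ncard_pos (Set.toFinite _)).2 (hne i)).ne'
  set lab : E ⊕ V → Option (Fin k) := Sum.elim
    (fun e => if e ∈ M₀ then none else some (part (ends e).1)) (fun v => some (part v)) with hlab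
  have hlabr : ∀ v, lab (Sum.inr v) = some (part v) := fun v => rfl
  have hlab0 : ∀ e ∈ M₀, lab (Sum.inl e) = none := fun e he => if_pos he
  have hlab1 : ∀ e, e ∉ M₀ → lab (Sum.inl e) = some (part (ends e).1) := fun e he => if_neg he
  have hex := exchange lab (fun S => ind ((G.bigG part).Tr S ∧
      ∀ e, (∃ f ∈ M₀, e = Sum.inl f) → e ∈ S))
    (fun i F => n i ^ 2 * ind (∀ e, (e ∈ F ∧ e.isRight = true) ↔ e = Sum.inr (r i)))
    (fun i F => n i ^ F.card * ind (∀ e ∈ F, e.isRight = true)) (by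
      intro i H hH
      have hUc : n i = (((Finset.univ.filter (fun v => part v = i)).map
          (Function.Embedding.inl : V ↪ V ⊕ Fin k)).card : ℚ) := by
        simp only [hn]
        rw [Finset.card_map, Set.ncard_eq_toFinset_card']
        congr 2
        ext v; simp
      have hU : ∀ x, x ∈ ((Finset.univ.filter (fun v => part v = i)).map
          (Function.Embedding.inl : V ↪ V ⊕ Fin k)) ↔ ∃ v, part v = i ∧ x = Sum.inl v := by
        intro x
        simp only [Finset.mem_map, Finset.mem_filter, Finset.mem_univ, true_and,
          Function.Embedding.inl_apply]
        exact exists_congr (fun v => and_congr_right (fun _ => eq_comm))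
      have hA : ∀ {d : DecidablePred (fun e => lab e = some i)}, ∀ e,
          e ∈ @Finset.filter _ (fun e => lab e = some i) d Finset.univ ↔ lab e = some i := by
        intro _ e; simp
      have hAl : ∀ e, lab (Sum.inl e) = some i ↔ part (ends e).1 = i ∧ part (ends e).2 = i := by
        intro e
        by_cases he : e ∈ M₀
        · rw [hlab0 e he]
          have := (hM e).1 he
          constructor
          · intro h; simp at h
          · rintro ⟨h1, h2⟩; exact absurd (h1.trans h2.symm) this
        · rw [hlab1 e he, Option.some_inj]
          have := not_not.1 (mt (hM e).2 he)
          constructor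
          · intro h; exact ⟨h, this ▸ h⟩
          · exact fun h => h.1
      have hinl : ∀ e, (G.bigG part).inc (Sum.inl e) =
          s(Sum.inl (ends e).1, Sum.inl (ends e).2) := by
        intro e
        show Sym2.map _ (G.inc e) = _
        rw [hends]; rfl
      have hinr : ∀ v, (G.bigG part).inc (Sum.inr v) = s(Sum.inl v, Sum.inr (part v)) :=
        fun v => rfl
      simp only [hUc]
      refine local_hyp (G.bigG part) _ (Sum.inr i) _ H (fun e => e.isRight = true)
        (Sum.elim (fun _ => Sum.inr i) Sum.inl) (Sum.inr (r i)) ?_ rfl ?_ ?_ ?_ ?_ ?_ ?_ ?_ _ ?_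
      · rw [hA, hlabr, hr]
      · rintro (e | v) he hR
        · rw [hA, hAl] at he
          refine ⟨_, (hU _).2 ⟨_, he.1, rfl⟩, _, (hU _).2 ⟨_, he.2, rfl⟩, ?_, hinl e⟩
          intro h
          apply hloop e
          rw [hends, Sym2.mk_isDiag_iff]
          exact Sum.inl_injective h
        · exact absurd rfl hR
      · intro x hx y hy hxy
        obtain ⟨u, hu, rfl⟩ := (hU _).1 hx
        obtain ⟨v, hv, rfl⟩ := (hU _).1 hy
        have huv : u ≠ v := fun h => hxy (by rw [h])
        obtain ⟨e, he, heu⟩ := (hclique i).1 u hu v hv huv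
        refine ⟨Sum.inl e, ⟨⟨?_, ?_⟩, ?_⟩, ?_⟩
        · rw [hA, hAl]
          simp only [hends, Sym2.eq_iff] at he
          rcases he with ⟨h1, h2⟩ | ⟨h1, h2⟩
          · exact ⟨h1 ▸ hu, h2 ▸ hv⟩
          · exact ⟨h1 ▸ hv, h2 ▸ hu⟩
        · simp
        · show Sym2.map _ (G.inc e) = _
          rw [he]; rfl
        · rintro (f | w) ⟨⟨_, h2⟩, h3⟩
          · congr 1
            apply heu
            have h3 : Sym2.map Sum.inl (G.inc f) = Sym2.map Sum.inl s(u, v) := h3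
            exact Sym2.map.injective Sum.inl_injective h3
          · exact absurd rfl h2
      · rw [hU]; rintro ⟨v, _, h⟩; cases h
      · rintro (e | v) he hR
        · simp at hR
        · rw [hA, hlabr, Option.some_inj] at he
          rw [hinr, he]; rfl
      · refine ⟨?_, ?_, ?_⟩
        · rintro (e | v) ⟨he, hR⟩
          · simp at hR
          · rw [hA, hlabr, Option.some_inj] at he
            exact Finset.mem_coe.2 ((hU _).2 ⟨v, he, rfl⟩)
        · rintro (e | v) ⟨he, hR⟩ (e' | v') ⟨he', hR'⟩ h
          · simp at hR
          · simp at hR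
          · simp at hR'
          · have := Sum.inl_injective h
            rw [this]
        · intro x hx
          obtain ⟨u, hu, rfl⟩ := (hU _).1 (Finset.mem_coe.1 hx)
          exact ⟨Sum.inr u, ⟨(hA _).2 (by rw [hlabr, hu]), rfl⟩, rfl⟩
      · rw [Finset.disjoint_left]
        intro e he he'
        exact hH e he ((hA e).1 he')
      · rintro (e | v) he hc
        · rw [hinl] at hc; simp at hc
        · rw [hinr] at hc
          simp only [Sym2.mem_iff, reduceCtorEq, Sum.inr.injEq, false_or] at hc
          exact hH _ he (by rw [hlabr, hc])
      · rintro e he ⟨f, hf, rfl⟩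
        rw [hA, hlab0 f hf] at he
        cases he)
  have hA := endA G part r hr M₀ lab hlabr n
  have hB := endB' G part M₀ ends hends lab hlabr hlab0 (fun e he => ⟨_, hlab1 e he⟩) n
  have key : (∏ i, n i ^ 2) * (G.tau M₀ : ℚ) = _ := hA.symm.trans (hex.trans hB)
  have hdis : ∀ e ∈ M₀, ∀ f ∈ M₀, ∀ v, v ∈ G.inc e → v ∈ G.inc f → e = f := by
    intro e he f hf v h1 h2
    by_contra h
    exact hmatching e he f hf h v h1 h2
  have hm1 : ∀ e, (ends e).1 ∈ G.inc e := fun e => by rw [hends]; exact Sym2.mem_mk_left _ _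
  have hm2 : ∀ e, (ends e).2 ∈ G.inc e := fun e => by rw [hends]; exact Sym2.mem_mk_right _ _
  have hB2 := endB part (fun e : {e // e ∈ M₀} => (ends e.1).1) (fun e => (ends e.1).2)
    (by
      intro e f h
      exact Subtype.ext (hdis _ e.2 _ f.2 _ (hm1 _) (by rw [show (ends e.1).1 = (ends f.1).1 from h]; exact hm1 _)))
    (by
      intro e f h
      exact Subtype.ext (hdis _ e.2 _ f.2 _ (hm2 _) (by rw [show (ends e.1).2 = (ends f.1).2 from h]; exact hm2 _)))
    (by
      intro e f h
      have hef : e = f := Subtype.ext (hdis _ e.2 _ f.2 _ (hm1 _)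
        (by rw [show (ends e.1).1 = (ends f.1).2 from h]; exact hm2 _))
      subst hef
      exact (hM _).1 e.2 (congrArg part h)) Gstar
    (by intro e; rw [hGstar, hends]; rfl) (fun v => (n (part v))⁻¹)
  have hRc : ∑ Q : Finset V, ind ((starG part (fun e : {e // e ∈ M₀} => (ends e.1).1)
      (fun e => (ends e.1).2)).Tr (Finset.univ.disjSum Q)) * ∏ v ∈ Q, n (part v) =
      (∏ v, n (part v)) * ∑ R : Finset V, (if (starG part (fun e : {e // e ∈ M₀} => (ends e.1).1)
      (fun e => (ends e.1).2)).Tr (Finset.univ.disjSum Rᶜ) then ∏ v ∈ R, (n (part v))⁻¹ else 0) := by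
    rw [Finset.mul_sum]
    refine Finset.sum_bij' (fun Q _ => Qᶜ) (fun Q _ => Qᶜ) (by simp) (by simp) (by simp) (by simp) ?_
    intro Q _
    rw [compl_compl]
    by_cases h : (starG part (fun e : {e // e ∈ M₀} => (ends e.1).1)
      (fun e => (ends e.1).2)).Tr (Finset.univ.disjSum Q)
    · rw [ind_pos h, if_pos h, one_mul, ← Finset.prod_mul_prod_compl Q, mul_assoc,
        ← Finset.prod_mul_distrib,
        Finset.prod_eq_one (s := Qᶜ) (fun v _ => mul_inv_cancel₀ (hn0 _)), mul_one]
    · rw [ind_neg h, if_neg h, zero_mul, mul_zero]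
  have hprod : ∏ v, n (part v) = ∏ i, n i ^ ((part ⁻¹' {i}).ncard) := by
    rw [← Finset.prod_fiberwise Finset.univ part]
    refine Finset.prod_congr rfl (fun i _ => ?_)
    rw [Finset.prod_congr rfl (g := fun _ => n i), Finset.prod_const]
    · congr 1
      rw [Set.ncard_eq_toFinset_card']
      congr 1
      ext v; simp
    · intro v hv
      rw [(Finset.mem_filter.1 hv).2]
  have hsum : ∑ᶠ T ∈ Gstar.ST ∅, ∏ᶠ e ∈ {f : {e : E // e ∈ M₀} | f ∉ T},
      ((n (part (ends e.val).1))⁻¹ + (n (part (ends e.val).2))⁻¹) =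
      ∑ T : Finset {e : E // e ∈ M₀}, if Gstar.Tr T then
        ∏ e ∈ Tᶜ, ((n (part (ends e.val).1))⁻¹ + (n (part (ends e.val).2))⁻¹) else 0 := by
    rw [finsum_mem_eq_finite_toFinset_sum _ (Set.toFinite _), ← Finset.sum_filter]
    refine Finset.sum_bij' (fun T _ => T.toFinset) (fun T _ => (T : Set _)) ?_ ?_ ?_ ?_ ?_
    · intro T hT
      simp only [Set.Finite.mem_toFinset] at hT
      rw [Finset.mem_filter, tr_iff]
      refine ⟨Finset.mem_univ _, ?_⟩
      rw [Set.coe_toFinset]; exact hT.1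
    · intro T hT
      rw [Finset.mem_filter, tr_iff] at hT
      simp only [Set.Finite.mem_toFinset]
      exact ⟨hT.2, Set.empty_subset _⟩
    · intro T _; exact Set.coe_toFinset _
    · intro T _; ext e; simp
    · intro T _
      rw [finprod_mem_eq_finite_toFinset_prod _ (Set.toFinite _)]
      refine Finset.prod_congr ?_ (fun _ _ => rfl)
      ext e; simp
  have hz : ∏ i : Fin k, ((part ⁻¹' {i}).ncard : ℚ) ^ (((part ⁻¹' {i}).ncard : ℤ) - 2) =
      (∏ i, n i ^ ((part ⁻¹' {i}).ncard)) / ∏ i, n i ^ 2 := by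
    rw [← Finset.prod_div_distrib]
    refine Finset.prod_congr rfl (fun i _ => ?_)
    rw [zpow_sub₀ (hn0 i), zpow_natCast]
    rfl
  have hP : (∏ i, n i ^ 2) ≠ 0 := Finset.prod_ne_zero_iff.2 (fun i _ => pow_ne_zero _ (hn0 i))
  rw [hz]
  refine Eq.trans ?_ (congrArg _ hsum.symm)
  rw [hRc, hB2, hprod] at key
  rw [div_mul_eq_mul_div, eq_div_iff hP, mul_comm, key]
  congr!

end Helpers

/-- formula for `τ_G(M₀)` when the vertex set of `G` is
partitioned into cliques `V₁, …, V_k` and the set `M₀` of edges between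
distinct cliques is a matching. -/
theorem tau_matching_between_cliques {V : Type u} {E : Type v}
    [Fintype V] [Fintype E]
    (G : Multigraph V E) (hconn : G.Connected) (hloop : G.Loopless)
    (k : ℕ) (part : V → Fin k)
    (hne : ∀ i, (part ⁻¹' {i}).Nonempty)
    (hclique : ∀ i, G.IsClique (part ⁻¹' {i}))
    (M₀ : Set E)
    (hM₀ : M₀ = ⋃ (i : Fin k), ⋃ (j : Fin k), ⋃ (_ : i < j),
      G.edgesBetween (part ⁻¹' {i}) (part ⁻¹' {j}))
    (hmatching : ∀ e ∈ M₀, ∀ f ∈ M₀, e ≠ f → ∀ v : V, v ∈ G.inc e → v ∉ G.inc f)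
    (ends : E → V × V) (hends : ∀ e, G.inc e = s((ends e).1, (ends e).2))
    (Gstar : Multigraph (Fin k) {e : E // e ∈ M₀})
    (hGstar : ∀ e : {e : E // e ∈ M₀}, Gstar.inc e = (G.inc e.val).map part) :
    (G.tau M₀ : ℚ) =
      (∏ i : Fin k, ((part ⁻¹' {i}).ncard : ℚ) ^ (((part ⁻¹' {i}).ncard : ℤ) - 2)) *
        ∑ᶠ T ∈ Gstar.ST ∅,
          ∏ᶠ e ∈ {f : {e : E // e ∈ M₀} | f ∉ T},
            ((((part ⁻¹' {part (ends e.val).1}).ncard : ℚ))⁻¹ +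
              (((part ⁻¹' {part (ends e.val).2}).ncard : ℚ))⁻¹) := by
  exact main_aux G hloop k part hne hclique M₀ hM₀ hmatching ends hends Gstar hGstar

end PaperST
end

section
/- Let G = (V,E) be a connected loopless multigraph whose vertex set is partitioned into nonempty sets V_0, V_1, ..., V_k such that: each V_i (1 ≤ i ≤ k) is a clique of G; E_G(V_i,V_j) = ∅ for all 1 ≤ i < j ≤ k; and each component of G[M] is a star with center in V_0, where M_i = E_G(V_i,V_0) and M = M_1 ∪ ... ∪ M_k. Let U = V_1 ∪ ... ∪ V_k and G•U the contraction of all clique edges, with v_i the vertex arising from V_i. Then for any R ⊆ M and N ⊆ E(G − U): τ_G(R ∪ N) = (∏_{i=1}^k |V_i|^{|V_i| − 2}) · Σ_{T ∈ ST_{G•U}(N)} ∏_{i=1}^k |V_i|^{−|M_i − E(T)|} · (1 + |V_i|)^{|(M_i − R) − E(T)|}. -/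
/-!
Spanning trees of multigraphs: common definitions.

A multigraph on a vertex type `V` with edge type `E` is given by an incidence
map `inc : E → Sym2 V` sending each edge to its (unordered) pair of endpoints.
-/

namespace PaperST

universe u v

open Multigraph

section Aux
open Classical

namespace Multigraph

/-- relabelling of vertices -/
def mapV {V : Type*} {E : Type*} {Q : Type*} (G : Multigraph V E) (b : V → Q) : Multigraph Q E :=
  ⟨fun e => (G.inc e).map b⟩

theorem mapV_mapV {V E Q Q' : Type*} (G : Multigraph V E) (b : V → Q) (c : Q → Q') :
    (G.mapV b).mapV c = G.mapV (c ∘ b) := by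
  simp [mapV, Sym2.map_map]

theorem reach_mono_s9 {V E : Type*} (G : Multigraph V E) {S T : Set E} (h : S ⊆ T) {u v : V}
    (hr : G.Reach S u v) : G.Reach T u v := by
  induction hr with
  | refl => exact Relation.ReflTransGen.refl
  | tail _ hs ih =>
    obtain ⟨e, he, hi⟩ := hs
    exact Relation.ReflTransGen.tail ih ⟨e, h he, hi⟩

theorem reach_symm_s9 {V E : Type*} (G : Multigraph V E) {S : Set E} {u v : V}
    (hr : G.Reach S u v) : G.Reach S v u :=
  (G.contractSetoid S).iseqv.symm hr

theorem reach_trans {V E : Type*} (G : Multigraph V E) {S : Set E} {u v w : V}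
    (hr : G.Reach S u v) (hs : G.Reach S v w) : G.Reach S u w :=
  Relation.ReflTransGen.trans hr hs

theorem reach_step {V E : Type*} (G : Multigraph V E) {S : Set E} {u v : V} {e : E}
    (he : e ∈ S) (hi : G.inc e = s(u, v)) : G.Reach S u v :=
  Relation.ReflTransGen.single ⟨e, he, hi⟩

/-- transport of reachability along a map sending steps to reachable pairs. -/
theorem reach_lift_s9 {V E V' E' : Type*} (G : Multigraph V E) (H : Multigraph V' E')
    {S : Set E} {T : Set E'} (f : V → V')
    (h : ∀ e ∈ S, ∀ u v, G.inc e = s(u, v) → H.Reach T (f u) (f v)) {u v : V}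
    (hr : G.Reach S u v) : H.Reach T (f u) (f v) := by
  induction hr with
  | refl => exact Relation.ReflTransGen.refl
  | tail _ hs ih =>
    obtain ⟨e, he, hi⟩ := hs
    exact H.reach_trans ih (h e he _ _ hi)

/-- closed sets -/
theorem reach_closed {V E : Type*} (G : Multigraph V E) {S : Set E} (P : V → Prop)
    (h : ∀ e ∈ S, ∀ u v, G.inc e = s(u, v) → P u → P v) {u v : V}
    (hr : G.Reach S u v) (hu : P u) : P v := by
  induction hr with
  | refl => exact hu
  | tail _ hs ih =>
    obtain ⟨e, he, hi⟩ := hs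
    exact h e he _ _ hi ih

theorem connectedOn_mapV_iff {V E Q : Type*} (G : Multigraph V E) (W F : Set E) (p : V → Q)
    (h1 : ∀ e ∈ W, ∀ u v, G.inc e = s(u, v) → p u = p v)
    (h2 : ∀ u v, p u = p v → G.Reach W u v) (h3 : Function.Surjective p) :
    G.ConnectedOn (F ∪ W) ↔ (G.mapV p).ConnectedOn F := by
  constructor
  · intro h a b
    obtain ⟨u, rfl⟩ := h3 a
    obtain ⟨v, rfl⟩ := h3 b
    refine reach_lift_s9 G (G.mapV p) p ?_ (h u v)
    rintro e (he | he) u v hi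
    · exact reach_step _ he (by simp [mapV, hi])
    · rw [h1 e he u v hi]; exact Relation.ReflTransGen.refl
  · intro h u v
    have key : ∀ a b, (G.mapV p).Reach F a b → ∀ u v, p u = a → p v = b →
        G.Reach (F ∪ W) u v := by
      intro a b hr
      induction hr with
      | refl => 
        intro u v hu hv
        exact reach_mono_s9 G Set.subset_union_right (h2 u v (hu.trans hv.symm))
      | @tail c d _ hs ih =>
        intro u v hu hv
        obtain ⟨e, he, hi⟩ := hs
        obtain ⟨⟨x, y⟩, hxy⟩ := Quot.exists_rep (G.inc e)
        have hxy : G.inc e = s(x, y) := hxy.symm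
        have hi' : s(p x, p y) = s(c, d) := by simpa [mapV, hxy] using hi
        rw [Sym2.eq_iff] at hi'
        rcases hi' with ⟨hx, hy⟩ | ⟨hx, hy⟩
        · refine reach_trans G (ih u x hu hx) (reach_trans G (reach_step G (Or.inl he) hxy) ?_)
          exact reach_mono_s9 G Set.subset_union_right (h2 _ _ (hy.trans hv.symm))
        · refine reach_trans G (ih u y hu hy) (reach_trans G
            (reach_step G (Or.inl he) (hxy.trans Sym2.eq_swap)) ?_)
          exact reach_mono_s9 G Set.subset_union_right (h2 _ _ (hx.trans hv.symm))
    exact key _ _ (h (p u) (p v)) u v rfl rfl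

theorem card_le_of_connectedOn {V E : Type*} [Finite V] [Finite E] (G : Multigraph V E)
    (T : Set E) (h : G.ConnectedOn T) : Nat.card V ≤ T.ncard + 1 := by
  rcases isEmpty_or_nonempty V with hV | hV
  · simp
  let H : SimpleGraph V := SimpleGraph.fromRel (G.Step T)
  have hH : H.Connected := by
    refine ⟨fun u v => ?_⟩
    have := h u v
    unfold Reach at this
    induction this with
    | refl => exact SimpleGraph.Reachable.refl _
    | @tail b c _ hs ih =>
      by_cases hbc : b = c
      · exact hbc ▸ ih
      · refine ih.trans (SimpleGraph.Adj.reachable ?_)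
        exact ⟨hbc, Or.inl hs⟩
  have h1 := hH.card_vert_le_card_edgeSet_add_one
  have h2 : Nat.card H.edgeSet ≤ T.ncard := by
    have : H.edgeSet ⊆ G.inc '' T := by
      intro z
      induction z with
      | _ x y =>
      intro hz
      rw [SimpleGraph.mem_edgeSet] at hz
      obtain ⟨_, ⟨e, he, hi⟩ | ⟨e, he, hi⟩⟩ := hz
      · exact ⟨e, he, hi⟩
      · exact ⟨e, he, hi.trans Sym2.eq_swap⟩
    calc Nat.card H.edgeSet = H.edgeSet.ncard := rfl
      _ ≤ (G.inc '' T).ncard := Set.ncard_le_ncard this (Set.toFinite _)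
      _ ≤ T.ncard := Set.ncard_image_le (Set.toFinite _)
  omega

theorem card_le_add_comps {V E : Type*} [Finite V] [Finite E] (G : Multigraph V E)
    (W : Set E) : Nat.card V ≤ W.ncard + Nat.card (Quotient (G.contractSetoid W)) := by
  let H : Multigraph (Option V) (E ⊕ Quotient (G.contractSetoid W)) :=
    ⟨Sum.elim (fun e => (G.inc e).map some) (fun q => s(none, some q.out))⟩
  let T : Set (E ⊕ Quotient (G.contractSetoid W)) := Sum.inl '' W ∪ Sum.inr '' Set.univ
  have hn : ∀ v : Option V, H.Reach T none v := by
    rintro (_ | v)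
    · exact Relation.ReflTransGen.refl
    · have h1 : H.Reach T none (some (Quotient.mk (G.contractSetoid W) v).out) :=
        reach_step (e := Sum.inr (Quotient.mk (G.contractSetoid W) v)) H
          (Or.inr ⟨_, trivial, rfl⟩) rfl
      have h2 : G.Reach W (Quotient.mk (G.contractSetoid W) v).out v :=
        Quotient.exact (Quotient.out_eq (Quotient.mk (G.contractSetoid W) v))
      refine reach_trans H h1 (reach_lift_s9 G H some ?_ h2)
      intro e he u v hi
      exact reach_step (e := Sum.inl e) H (Or.inl ⟨e, he, rfl⟩) (by simp [H, hi])
  have hc : H.ConnectedOn T := fun u v => reach_trans H (reach_symm_s9 H (hn u)) (hn v)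
  have h1 := card_le_of_connectedOn H T hc
  have h2 : T.ncard ≤ W.ncard + Nat.card (Quotient (G.contractSetoid W)) := by
    refine (Set.ncard_union_le _ _).trans ?_
    rw [Set.ncard_image_of_injective _ Sum.inl_injective,
      Set.ncard_image_of_injective _ Sum.inr_injective, Set.ncard_univ]
  rw [Finite.card_option] at h1
  omega

theorem no_loop {V E : Type*} [Finite V] [Finite E] (G : Multigraph V E) (F : Set E)
    (h : G.IsSpanningTree F) (e : E) (he : e ∈ F) : ¬ (G.inc e).IsDiag := by
  intro hd
  have hc : G.ConnectedOn (F \ {e}) := by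
    intro u v
    refine reach_lift_s9 G G id ?_ (h.1 u v)
    intro f hf a b hi
    by_cases hfe : f = e
    · subst hfe
      rw [hi, Sym2.mk_isDiag_iff] at hd
      subst hd
      exact Relation.ReflTransGen.refl
    · exact reach_step G ⟨hf, hfe⟩ hi
  have h1 := card_le_of_connectedOn G _ hc
  have h2 := Set.ncard_sdiff_singleton_add_one he (Set.toFinite _)
  have h3 := h.2
  omega

theorem sum_fib {V Q : Type*} [Fintype V] [Fintype Q] (K : Finset V) (b : V → Q) (f : Q → ℕ) :
    ∑ x ∈ K, f (b x) = ∑ q, (K.filter (fun x => b x = q)).card * f q := by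
  rw [← Finset.sum_fiberwise K b]
  refine Finset.sum_congr rfl fun q _ => ?_
  rw [Finset.sum_congr rfl (g := fun _ => f q), Finset.sum_const, smul_eq_mul]
  intro x hx
  rw [(Finset.mem_filter.mp hx).2]

theorem prod_two {Q : Type*} [Fintype Q] (w : Q → ℕ) (q q' : Q) (h : q ≠ q') :
    w q * w q' * ∏ z ∈ (Finset.univ.erase q').erase q, w z = ∏ z, w z := by
  rw [← Finset.mul_prod_erase Finset.univ w (Finset.mem_univ q'),
    ← Finset.mul_prod_erase (Finset.univ.erase q') w (Finset.mem_erase.mpr ⟨h, Finset.mem_univ q⟩)]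
  ring

theorem sum_two {Q : Type*} [Fintype Q] (w : Q → ℕ) (m : ℕ) (hm : Fintype.card Q = m + 1) :
    ∑ q, ∑ q', (if q ≠ q' then w q + w q' else 0) = 2 * m * ∑ q, w q := by
  have h1 : ∀ q, ∑ q', (if q ≠ q' then w q else 0) = m * w q := by
    intro q
    rw [← Finset.sum_filter, Finset.sum_const, smul_eq_mul]
    congr 1
    have : (Finset.univ.filter (fun a => q ≠ a)) = Finset.univ.erase q := by
      ext a; simp [eq_comm]
    rw [this, Finset.card_erase_of_mem (Finset.mem_univ _), Finset.card_univ, hm]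
    rfl
  have h3 : ∑ q, ∑ q', (if q ≠ q' then w q' else 0) = ∑ q, m * w q := by
    rw [Finset.sum_comm]
    refine Finset.sum_congr rfl fun q _ => ?_
    rw [← h1 q]
    refine Finset.sum_congr rfl fun q' _ => ?_
    by_cases h : q = q'
    · simp [h]
    · simp [h, Ne.symm h]
  have h2 : ∑ q, ∑ q', (if q ≠ q' then w q + w q' else 0)
    = ∑ q, ∑ q', (if q ≠ q' then w q else 0) + ∑ q, ∑ q', (if q ≠ q' then w q' else 0) := by
    rw [← Finset.sum_add_distrib]
    refine Finset.sum_congr rfl fun q _ => ?_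
    rw [← Finset.sum_add_distrib]
    refine Finset.sum_congr rfl fun q' _ => ?_
    by_cases h : q = q'
    · simp [h]
    · simp [h]
  rw [h2, h3]
  simp only [h1]
  rw [← Finset.mul_sum]
  ring

theorem pairs_card {V E : Type*} [Fintype V] [Fintype E] (G : Multigraph V E) (F : Set E)
    (hF : ∀ e ∈ F, ¬ (G.inc e).IsDiag)
    (hu : ∀ e ∈ F, ∀ f ∈ F, G.inc e = G.inc f → e = f) :
    (Finset.univ.filter (fun p : V × V => ∃ e ∈ F, G.inc e = s(p.1, p.2))).card
      = 2 * F.ncard := by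
  have h1 : (Finset.univ.filter (fun p : V × V => ∃ e ∈ F, G.inc e = s(p.1, p.2)))
      = F.toFinset.biUnion
        (fun e => Finset.univ.filter (fun p : V × V => G.inc e = s(p.1, p.2))) := by
    ext p; simp
  rw [h1, Finset.card_biUnion]
  · rw [Finset.sum_congr rfl (g := fun _ => 2)]
    · simp [Set.ncard_eq_toFinset_card', mul_comm]
    · intro e he
      have he := hF e (Set.mem_toFinset.mp he)
      obtain ⟨⟨x, y⟩, hxy⟩ := Quot.exists_rep (G.inc e)
      have hxy : G.inc e = s(x, y) := hxy.symm
      rw [hxy, Sym2.mk_isDiag_iff] at he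
      have : (Finset.univ.filter (fun p : V × V => G.inc e = s(p.1, p.2))) = {(x, y), (y, x)} := by
        ext ⟨a, b⟩
        simp only [hxy, Finset.mem_filter, Finset.mem_univ, true_and, Sym2.eq_iff,
          Finset.mem_insert, Finset.mem_singleton, Prod.mk.injEq]
        grind
      rw [this, Finset.card_pair]
      intro h
      exact he (Prod.mk.inj h).1
  · intro e he f hf hef
    rw [Function.onFun, Finset.disjoint_left]
    intro p hp hq
    simp only [Finset.mem_filter, Finset.mem_univ, true_and] at hp hq
    exact hef (hu e (by simpa using he) f (by simpa using hf) (hp.trans hq.symm))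

/-- contraction of a single edge -/
theorem contract_one {V E Q : Type*} [Fintype V] [Fintype E] [Fintype Q] (G : Multigraph V E)
    (K : Set V) (b : V → Q) (x y : V) (hxy : b x ≠ b y) (e : E) (he : G.inc e = s(x, y))
    (hx : x ∈ K) (hy : y ∈ K)
    (p : Q → {z : Q // z ≠ b y}) (hp : ∀ z, (p z : Q) = if z = b y then b x else z) :
    (Finset.univ.filter (fun F : Set E => (F ⊆ G.edgesWithin K ∧ (G.mapV b).IsSpanningTree F) ∧
      e ∈ F)).card
    = (Finset.univ.filter (fun F : Set E => F ⊆ G.edgesWithin K ∧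
        (G.mapV (p ∘ b)).IsSpanningTree F)).card := by
  have hcard : Nat.card {z : Q // z ≠ b y} + 1 = Nat.card Q := by
    rw [Nat.card_eq_fintype_card, Nat.card_eq_fintype_card, Fintype.card_subtype_compl]
    have : 0 < Fintype.card Q := Fintype.card_pos_iff.mpr ⟨b y⟩
    simp; omega
  have hcon : ∀ F : Set E, (G.mapV b).ConnectedOn (F ∪ {e}) ↔ (G.mapV (p ∘ b)).ConnectedOn F := by
    intro F
    rw [← mapV_mapV]
    apply connectedOn_mapV_iff
    · rintro f rfl u v hi
      have hi : s(b x, b y) = s(u, v) := by simpa [mapV, he] using hi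
      rw [Sym2.eq_iff] at hi
      apply Subtype.ext
      rw [hp, hp]
      rcases hi with ⟨rfl, rfl⟩ | ⟨rfl, rfl⟩ <;> simp [hxy]
    · intro u v huv
      have huv := congrArg Subtype.val huv
      rw [hp, hp] at huv
      have h1 : (G.mapV b).Reach {e} (b x) (b y) :=
        reach_step (e := e) _ rfl (by simp [mapV, he])
      split_ifs at huv with h2 h3 h3
      · rw [h2, h3]; exact Relation.ReflTransGen.refl
      · rw [h2, ← huv]; exact reach_symm_s9 _ h1
      · rw [h3, huv]; exact h1
      · rw [huv]; exact Relation.ReflTransGen.refl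
    · rintro ⟨z, hz⟩
      exact ⟨z, Subtype.ext (by rw [hp]; simp [hz])⟩
  have hmem : e ∈ G.edgesWithin K := by
    intro v hv
    rw [he, Sym2.mem_iff] at hv
    rcases hv with rfl | rfl <;> assumption
  refine Finset.card_bij' (fun F _ => F \ {e}) (fun F _ => F ∪ {e}) ?_ ?_ ?_ ?_
  · intro F hF
    simp only [Finset.mem_filter, Finset.mem_univ, true_and] at hF ⊢
    obtain ⟨⟨h1, h2⟩, h3⟩ := hF
    refine ⟨Set.sdiff_subset.trans h1, ?_, ?_⟩
    · rw [← hcon]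
      convert h2.1
      simp [h3]
    · have h4 := Set.ncard_sdiff_singleton_add_one h3 (Set.toFinite _)
      have h5 := h2.2
      omega
  · intro F hF
    simp only [Finset.mem_filter, Finset.mem_univ, true_and] at hF ⊢
    obtain ⟨h1, h2⟩ := hF
    refine ⟨⟨Set.union_subset h1 (by simpa using hmem), (hcon F).mpr h2.1, ?_⟩, by simp⟩
    have h4 := card_le_of_connectedOn _ _ ((hcon F).mpr h2.1)
    have h5 := h2.2
    have h6 := Set.ncard_union_le F {e}
    rw [Set.ncard_singleton] at h6
    omega
  · intro F hF
    simp only [Finset.mem_filter, Finset.mem_univ, true_and] at hF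
    simp [hF.2]
  · intro F hF
    simp only [Finset.mem_filter, Finset.mem_univ, true_and] at hF
    have : e ∉ F := by
      intro h
      have h4 := card_le_of_connectedOn _ _ ((hcon F).mpr hF.2.1)
      have h5 := hF.2.2
      rw [Set.union_eq_self_of_subset_right (by simpa using h)] at h4
      omega
    ext f
    simp only [Set.union_singleton, Set.mem_sdiff, Set.mem_insert_iff, Set.mem_singleton_iff]
    grind

theorem clique_count {V E : Type*} [Fintype V] [Fintype E] (G : Multigraph V E)
    (K : Finset V) (hK : G.IsClique (K : Set V)) (m : ℕ) :
    ∀ (Q : Type u) [Fintype Q] (b : V → Q), Fintype.card Q = m + 1 →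
    (Finset.univ.filter (fun F : Set E => F ⊆ G.edgesWithin K ∧
        (G.mapV b).IsSpanningTree F)).card * K.card ^ 2
      = K.card ^ (m + 1) * ∏ q, (K.filter (fun x => b x = q)).card := by
  induction m with
  | zero =>
    intro Q _ b hQ
    obtain ⟨q, hq⟩ := Fintype.card_eq_one_iff.mp hQ
    have h1 : (Finset.univ.filter (fun F : Set E => F ⊆ G.edgesWithin K ∧
        (G.mapV b).IsSpanningTree F)) = {∅} := by
      ext F
      simp only [Finset.mem_filter, Finset.mem_univ, true_and, Finset.mem_singleton]
      constructor
      · rintro ⟨_, _, h⟩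
        rw [Nat.card_eq_fintype_card, hQ] at h
        exact (Set.ncard_eq_zero (Set.toFinite _)).mp (by omega)
      · rintro rfl
        refine ⟨by simp, ?_, by simp [hQ]⟩
        intro u v
        rw [hq u, hq v]
        exact Relation.ReflTransGen.refl
    have h2 : ∏ q, (K.filter (fun x => b x = q)).card = K.card := by
      rw [Fintype.prod_eq_single q (fun z hz => absurd (hq z) hz)]
      congr 1
      exact Finset.filter_true_of_mem (fun x _ => hq _)
    rw [h1, h2]
    simp [pow_two]
  | succ m ih =>
    intro Q _ b hQ
    set A := (Finset.univ.filter (fun F : Set E => F ⊆ G.edgesWithin K ∧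
        (G.mapV b).IsSpanningTree F)) with hA
    set w : Q → ℕ := fun q => (K.filter (fun x => b x = q)).card with hw
    have hwsum : ∑ q, w q = K.card := by
      have := sum_fib K b (fun _ => 1)
      simpa using this.symm
    let P : Finset (V × V) := (K ×ˢ K).filter (fun p => b p.1 ≠ b p.2)
    let r : Set E → V × V → Prop := fun F p => ∃ e ∈ F, G.inc e = s(p.1, p.2)
    let h : Q → Q → ℕ := fun q q' => (w q + w q') * ∏ z ∈ (Finset.univ.erase q').erase q, w z
    have hi : ∀ F ∈ A, (P.filter (fun p => r F p)).card = 2 * (m + 1) := by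
      intro F hF
      simp only [hA, Finset.mem_filter, Finset.mem_univ, true_and] at hF
      have h1 := pairs_card G F (fun e he => hK.2 e (hF.1 he)) (by
        intro e he f hf hef
        obtain ⟨⟨x, y⟩, hxy⟩ := Quot.exists_rep (G.inc e)
        have hxy : G.inc e = s(x, y) := hxy.symm
        have hd := hK.2 e (hF.1 he)
        have hx := hF.1 he x (by simp [hxy])
        have hy := hF.1 he y (by simp [hxy])
        rw [hxy, Sym2.mk_isDiag_iff] at hd
        exact (hK.1 x hx y hy hd).unique hxy (hef.symm.trans hxy))
      have h2 := hF.2.2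
      rw [Nat.card_eq_fintype_card, hQ] at h2
      have h3 : F.ncard = m + 1 := by omega
      rw [h3] at h1
      rw [← h1]
      congr 1
      ext ⟨x, y⟩
      simp only [P, r, Finset.mem_filter, Finset.mem_product, Finset.mem_univ, true_and]
      constructor
      · exact fun h => h.2
      · rintro ⟨e, he, hxy⟩
        have hx := hF.1 he x (by simp [hxy])
        have hy := hF.1 he y (by simp [hxy])
        refine ⟨⟨⟨hx, hy⟩, ?_⟩, e, he, hxy⟩
        have := no_loop _ _ hF.2 e he
        simpa [mapV, hxy] using this
    have hii : ∑ F ∈ A, (P.filter (fun p => r F p)).card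
        = ∑ p ∈ P, (A.filter (fun F => r F p)).card :=
      Finset.sum_card_bipartiteAbove_eq_sum_card_bipartiteBelow r
    rw [Finset.sum_congr rfl hi, Finset.sum_const, smul_eq_mul] at hii
    have hiii : ∀ p ∈ P, (A.filter (fun F => r F p)).card * K.card ^ 2
        = K.card ^ (m + 1) * h (b p.1) (b p.2) := by
      rintro ⟨x, y⟩ hp
      simp only [P, Finset.mem_filter, Finset.mem_product] at hp
      obtain ⟨⟨hx, hy⟩, hbxy⟩ := hp
      have hne : x ≠ y := fun h => hbxy (congrArg b h)
      obtain ⟨e, he, hu⟩ := hK.1 x hx y hy hne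
      let p : Q → {z : Q // z ≠ b y} := fun z => if hz : z = b y then ⟨b x, hbxy⟩ else ⟨z, hz⟩
      have hp : ∀ z, (p z : Q) = if z = b y then b x else z := by
        intro z
        simp only [p]
        split_ifs <;> rfl
      have hc := contract_one G K b x y hbxy e he hx hy p hp
      have h1 : A.filter (fun F => r F (x, y)) = (Finset.univ.filter (fun F : Set E =>
          (F ⊆ G.edgesWithin K ∧ (G.mapV b).IsSpanningTree F) ∧ e ∈ F)) := by
        ext F
        simp only [hA, Finset.mem_filter, Finset.mem_univ, true_and, r]
        refine and_congr_right fun _ => ⟨?_, fun h => ⟨e, h, he⟩⟩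
        rintro ⟨f, hf, hfi⟩
        exact hu f hfi ▸ hf
      have hQ' : Fintype.card {z : Q // z ≠ b y} = m + 1 := by
        rw [Fintype.card_subtype_compl]
        simp [hQ]
      rw [h1, hc, ih {z : Q // z ≠ b y} (p ∘ b) hQ']
      congr 1
      have h2 : ∀ z : {z : Q // z ≠ b y}, (K.filter (fun v => (p ∘ b) v = z)).card
          = if (z : Q) = b x then w (b x) + w (b y) else w z := by
        rintro ⟨z, hz⟩
        have h3 : ∀ v, (p ∘ b) v = ⟨z, hz⟩ ↔ (if b v = b y then b x else b v) = z := by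
          intro v
          rw [← hp, Subtype.ext_iff]; rfl
        simp only [h3]
        split_ifs with hzx
        · subst hzx
          simp only [hw]
          rw [← Finset.card_union_of_disjoint]
          · congr 1
            ext v
            simp only [Finset.mem_filter, Finset.mem_union]
            grind
          · rw [Finset.disjoint_left]
            intro v hv hv'
            simp only [Finset.mem_filter] at hv hv'
            exact hbxy (hv.2.symm.trans hv'.2)
        · simp only [hw]
          congr 1
          ext v
          simp only [Finset.mem_filter]
          grind
      refine (Finset.prod_congr rfl (g := fun z : {z : Q // z ≠ b y} =>
        if (z : Q) = b x then w (b x) + w (b y) else w z) (fun z _ => ?_)).trans ?_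
      · rw [← h2 z]; congr
      have h4 := Finset.prod_subtype (F := inferInstance) (p := fun z => z ≠ b y) (Finset.univ.erase (b y))
        (by intro z; simp) (fun z => if z = b x then w (b x) + w (b y) else w z)
      rw [← h4, ← Finset.mul_prod_erase (Finset.univ.erase (b y)) _
        (Finset.mem_erase.mpr ⟨hbxy, Finset.mem_univ _⟩)]
      simp only [h, if_true]
      congr 1
      refine Finset.prod_congr rfl fun z hz => ?_
      rw [if_neg (Finset.ne_of_mem_erase hz)]
    have hiv : ∑ p ∈ P, h (b p.1) (b p.2) = 2 * (m + 1) * K.card * ∏ z, w z := by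
      have h1 : ∑ p ∈ P, h (b p.1) (b p.2)
          = ∑ x ∈ K, ∑ y ∈ K, (if b x ≠ b y then h (b x) (b y) else 0) := by
        rw [Finset.sum_filter, Finset.sum_product]
      rw [h1, sum_fib K b (fun q => ∑ y ∈ K, (if q ≠ b y then h q (b y) else 0))]
      have h2 : ∀ q, ∑ y ∈ K, (if q ≠ b y then h q (b y) else 0)
          = ∑ q', w q' * (if q ≠ q' then h q q' else 0) := 
        fun q => sum_fib K b (fun q' => if q ≠ q' then h q q' else 0)
      simp only [h2]
      rw [← hwsum, ← sum_two w (m + 1) hQ, Finset.sum_mul]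
      refine Finset.sum_congr rfl fun q _ => ?_
      rw [Finset.mul_sum, Finset.sum_mul]
      refine Finset.sum_congr rfl fun q' _ => ?_
      split_ifs with hqq
      · rw [← prod_two w q q' hqq]
        simp only [h, hw]
        ring
      · simp
    have h5 : 2 * (m + 1) * (A.card * K.card ^ 2)
        = 2 * (m + 1) * (K.card ^ (m + 1 + 1) * ∏ q, w q) := by
      calc 2 * (m + 1) * (A.card * K.card ^ 2) = (A.card * (2 * (m + 1))) * K.card ^ 2 := by ring
        _ = ∑ p ∈ P, (A.filter (fun F => r F p)).card * K.card ^ 2 := by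
            rw [hii, Finset.sum_mul]
        _ = K.card ^ (m + 1) * (2 * (m + 1) * K.card * ∏ z, w z) := by
            rw [Finset.sum_congr rfl hiii, ← Finset.mul_sum, hiv]
        _ = _ := by ring
    exact Nat.eq_of_mul_eq_mul_left (by positivity) h5

theorem exists_ends {V E : Type*} (G : Multigraph V E) (e : E) : ∃ x y, G.inc e = s(x, y) := by
  obtain ⟨⟨x, y⟩, hxy⟩ := Quot.exists_rep (G.inc e)
  exact ⟨x, y, hxy.symm⟩

theorem clique_lemma {V : Type u} {E : Type v} [Fintype V] [Fintype E] (G : Multigraph V E)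
    (K : Finset V) (hK : G.IsClique (K : Set V)) (hKne : K.Nonempty) (W : Set E)
    (hWd : ∀ e ∈ W, e ∉ G.edgesWithin K)
    (hW1 : ∀ a ∈ K, ∀ e ∈ W, ∀ f ∈ W, a ∈ G.inc e → a ∈ G.inc f → e = f)
    (C : Set E) (hC : C ⊆ G.edgesWithin K) (hCc : C.ncard + 1 = K.card)
    (hCr : ∀ x ∈ K, ∀ y ∈ K, G.Reach C x y) :
    ((Finset.univ.filter (fun F : Set E => F ⊆ G.edgesWithin K ∧
        G.IsSpanningTree (F ∪ W))).card : ℚ)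
      = (K.card : ℚ) ^ ((K.card : ℤ) - 2) *
        ∑ D ∈ Finset.univ.filter (fun D : Set E => D ⊆ {e | e ∈ W ∧ ∃ a ∈ K, a ∈ G.inc e} ∧
          G.IsSpanningTree ((W \ D) ∪ C)), (K.card : ℚ) ^ (-(D.ncard : ℤ)) := by
  obtain ⟨k0, hk0⟩ := hKne
  let Q := Quotient (G.contractSetoid W)
  let b : V → Q := Quotient.mk (G.contractSetoid W)
  have hb : ∀ u v, b u = b v ↔ G.Reach W u v := fun u v => Quotient.eq
  have hbs : Function.Surjective b := Quotient.mk_surjective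
  have : Fintype Q := Fintype.ofFinite Q
  have hL0 : Nat.card V ≤ W.ncard + Fintype.card Q := by
    have := card_le_add_comps G W
    rwa [← Nat.card_eq_fintype_card]
  -- no W edge inside K
  have hWK : ∀ e ∈ W, ∀ u v, G.inc e = s(u, v) → u ∈ K → v ∉ K := by
    intro e he u v hi hu hv
    apply hWd e he
    intro z hz
    rw [hi, Sym2.mem_iff] at hz
    rcases hz with rfl | rfl <;> assumption
  have hWb : ∀ e ∈ W, ∀ u v, G.inc e = s(u, v) → b u = b v :=
    fun e he u v hi => (hb u v).mpr (reach_step G he hi)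
  have hCW : ∀ D : Set E, Disjoint (W \ D) C := by
    intro D
    rw [Set.disjoint_left]
    intro e he hc
    exact hWd e he.1 (hC hc)
  let X : Set E → Finset V := fun D => K.filter (fun a => ∀ e ∈ D, a ∉ G.inc e)
  have hbeta : ∀ D : Set E, D ⊆ {e | e ∈ W ∧ ∃ a ∈ K, a ∈ G.inc e} →
      (X D).card + D.ncard = K.card := by
    intro D hD
    rw [← Finset.card_filter_add_card_filter_not (s := K) (fun a => ∀ e ∈ D, a ∉ G.inc e)]
    congr 1
    rw [Set.ncard_eq_toFinset_card']
    symm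
    have hex : ∀ a, a ∈ K.filter (fun a => ¬ ∀ e ∈ D, a ∉ G.inc e) → ∃ e ∈ D, a ∈ G.inc e := by
      intro a ha
      have := (Finset.mem_filter.mp ha).2
      push Not at this
      exact this
    refine Finset.card_bij (fun a ha => (hex a ha).choose) ?_ ?_ ?_
    · intro a ha
      exact Set.mem_toFinset.mpr (hex a ha).choose_spec.1
    · intro a ha a' ha' heq
      have h1 := (hex a ha).choose_spec
      have h2 := (hex a' ha').choose_spec
      rw [← heq] at h2
      set e := (hex a ha).choose
      by_contra hne
      have hi : G.inc e = s(a, a') := ((Sym2.mem_and_mem_iff hne).mp ⟨h1.2, h2.2⟩)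
      exact hWK e (hD h1.1).1 a a' hi (Finset.mem_filter.mp ha).1 (Finset.mem_filter.mp ha').1
    · intro e he
      have he := Set.mem_toFinset.mp he
      obtain ⟨heW, a, haK, hae⟩ := hD he
      have ha : a ∈ K.filter (fun a => ¬ ∀ e ∈ D, a ∉ G.inc e) := by
        rw [Finset.mem_filter]
        refine ⟨haK, ?_⟩
        push Not
        exact ⟨e, he, hae⟩
      refine ⟨a, ha, ?_⟩
      have h1 := (hex a ha).choose_spec
      exact hW1 a haK _ (hD h1.1).1 e heW h1.2 hae
  have halpha : ∀ D : Set E, D ⊆ {e | e ∈ W ∧ ∃ a ∈ K, a ∈ G.inc e} →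
      G.ConnectedOn ((W \ D) ∪ C) → ∀ q, ∃ a ∈ X D, b a = q := by
    intro D hD hcon q
    by_contra hno
    push Not at hno
    have hno' : ∀ a ∈ K, b a = q → ∃ e ∈ D, a ∈ G.inc e := by
      intro a ha hq
      by_contra h
      push Not at h
      exact hno a (Finset.mem_filter.mpr ⟨ha, h⟩) hq
    obtain ⟨v0, hv0⟩ := hbs q
    have hP : ∃ v, b v = q ∧ v ∉ K := by
      by_cases hv : v0 ∈ K
      · obtain ⟨e, he, hve⟩ := hno' v0 hv hv0
        obtain ⟨z, hz⟩ := Sym2.mem_iff_exists.mp hve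
        exact ⟨z, (hWb e (hD he).1 _ _ hz).symm.trans hv0, hWK e (hD he).1 _ _ hz hv⟩
      · exact ⟨v0, hv0, hv⟩
    obtain ⟨v, hv⟩ := hP
    have := reach_closed G (fun v => b v = q ∧ v ∉ K) ?_ (hcon v k0) hv
    · exact this.2 hk0
    · rintro e (he | he) x y hi ⟨hx, hxK⟩
      · have hy : b y = q := (hWb e he.1 _ _ hi).symm.trans hx
        refine ⟨hy, fun hyK => ?_⟩
        obtain ⟨f, hf, hyf⟩ := hno' y hyK hy
        have := hW1 y hyK e he.1 f (hD hf).1 (by simp [hi]) hyf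
        exact he.2 (this ▸ hf)
      · exact absurd (hC he x (by simp [hi])) hxK
  have hcardW : ∀ D : Set E, D ⊆ {e | e ∈ W ∧ ∃ a ∈ K, a ∈ G.inc e} →
      ((W \ D) ∪ C).ncard + 1 + D.ncard = W.ncard + K.card := by
    intro D hD
    rw [Set.ncard_union_eq (hCW D)]
    have := Set.ncard_sdiff_add_ncard_of_subset (fun e he => (hD he).1 : D ⊆ W)
    omega
  have hDcard : ∀ D : Set E, D ⊆ {e | e ∈ W ∧ ∃ a ∈ K, a ∈ G.inc e} →
      G.IsSpanningTree ((W \ D) ∪ C) → (X D).card = Fintype.card Q ∧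
        W.ncard + Fintype.card Q = Nat.card V := by
    intro D hD hST
    have h1 := hbeta D hD
    have h2 := hcardW D hD
    have h3 := hST.2
    have h4 : Fintype.card Q ≤ (X D).card := by
      rw [← Finset.card_univ]
      refine Finset.card_le_card_of_surjOn b ?_
      intro q _
      obtain ⟨a, ha, haq⟩ := halpha D hD hST.1 q
      exact ⟨a, ha, haq⟩
    omega
  have hconF : ∀ F : Set E, G.ConnectedOn (F ∪ W) ↔ (G.mapV b).ConnectedOn F := fun F =>
    connectedOn_mapV_iff G W F b hWb (fun u v h => (hb u v).mp h) hbs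
  have hcardF : ∀ F : Set E, F ⊆ G.edgesWithin K → (F ∪ W).ncard = F.ncard + W.ncard := by
    intro F hF
    rw [Set.ncard_union_eq]
    rw [Set.disjoint_left]
    intro e he hw
    exact hWd e hw (hF he)
  by_cases hgood : W.ncard + Fintype.card Q = Nat.card V
  swap
  · have h1 : (Finset.univ.filter (fun F : Set E => F ⊆ G.edgesWithin K ∧
        G.IsSpanningTree (F ∪ W))) = ∅ := by
      rw [Finset.filter_eq_empty_iff]
      rintro F _ ⟨hF, hST⟩
      have h1 := card_le_of_connectedOn _ _ ((hconF F).mp hST.1)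
      have h2 := hcardF F hF
      have h3 := hST.2
      rw [Nat.card_eq_fintype_card] at h1
      omega
    have h2 : Finset.univ.filter (fun D : Set E => D ⊆ {e | e ∈ W ∧ ∃ a ∈ K, a ∈ G.inc e} ∧
          G.IsSpanningTree ((W \ D) ∪ C)) = ∅ := by
      rw [Finset.filter_eq_empty_iff]
      rintro D _ ⟨hD, hST⟩
      exact hgood (hDcard D hD hST).2
    rw [h1, h2]
    simp
  have hQpos : 0 < Fintype.card Q := Fintype.card_pos_iff.mpr ⟨b k0⟩
  have hcount := clique_count G K hK (Fintype.card Q - 1) Q b (by omega)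
  have hfil : (Finset.univ.filter (fun F : Set E => F ⊆ G.edgesWithin K ∧
        G.IsSpanningTree (F ∪ W))) = (Finset.univ.filter (fun F : Set E => F ⊆ G.edgesWithin K ∧
        (G.mapV b).IsSpanningTree F)) := by
    apply Finset.filter_congr
    intro F _
    refine and_congr_right fun hF => ?_
    unfold IsSpanningTree
    rw [hconF, hcardF F hF, Nat.card_eq_fintype_card (α := Q)]
    refine and_congr_right fun _ => ?_
    omega
  have hDn : (Finset.univ.filter (fun D : Set E => D ⊆ {e | e ∈ W ∧ ∃ a ∈ K, a ∈ G.inc e} ∧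
          G.IsSpanningTree ((W \ D) ∪ C))).card
      = ∏ q, (K.filter (fun x => b x = q)).card := by
    rw [← Fintype.card_piFinset]
    symm
    let Dc : (Q → V) → Set E := fun c => {e | e ∈ W ∧ ∃ a ∈ K, a ∈ G.inc e ∧ c (b a) ≠ a}
    have hDcS : ∀ c, Dc c ⊆ {e | e ∈ W ∧ ∃ a ∈ K, a ∈ G.inc e} := by
      rintro c e ⟨he, a, ha, hae, _⟩
      exact ⟨he, a, ha, hae⟩
    have hc : ∀ c, c ∈ Fintype.piFinset (fun q => K.filter (fun x => b x = q)) →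
        ∀ q, c q ∈ K ∧ b (c q) = q := by
      intro c hc q
      exact Finset.mem_filter.mp (Fintype.mem_piFinset.mp hc q)
    have hbad : ∀ c : Q → V, (∀ q, c q ∈ K ∧ b (c q) = q) → ∀ a, c (b a) ≠ a →
        ∃ z, ∃ e ∈ W, G.inc e = s(a, z) := by
      intro c hc a ha
      rcases Relation.ReflTransGen.cases_head ((hb a (c (b a))).mp (hc (b a)).2.symm) with
        h | ⟨z, ⟨e, he, hi⟩, _⟩
      · exact absurd h.symm ha
      · exact ⟨z, e, he, hi⟩
    have hXDc : ∀ c : Q → V, (∀ q, c q ∈ K ∧ b (c q) = q) → 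
        ∀ a, a ∈ X (Dc c) ↔ (a ∈ K ∧ c (b a) = a) := by
      intro c hc a
      simp only [X, Finset.mem_filter]
      refine and_congr_right fun haK => ⟨?_, ?_⟩
      · intro h
        by_contra hne
        obtain ⟨z, e, he, hi⟩ := hbad c hc a hne
        exact h e ⟨he, a, haK, by simp [hi], hne⟩ (by simp [hi])
      · rintro h e ⟨he, a', ha'K, ha'e, hne⟩ hae
        have haa : a ≠ a' := by rintro rfl; exact hne h
        have hi : G.inc e = s(a, a') := ((Sym2.mem_and_mem_iff haa).mp ⟨hae, ha'e⟩)
        exact hWK e he a a' hi haK ha'K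
    have hXcard : ∀ c : Q → V, (∀ q, c q ∈ K ∧ b (c q) = q) → (X (Dc c)).card = Fintype.card Q := by
      intro c hc
      have : X (Dc c) = Finset.univ.image c := by
        ext a
        rw [hXDc c hc a]
        simp only [Finset.mem_image, Finset.mem_univ, true_and]
        constructor
        · rintro ⟨_, h⟩
          exact ⟨_, h⟩
        · rintro ⟨q, rfl⟩
          exact ⟨(hc q).1, by rw [(hc q).2]⟩
      rw [this, Finset.card_image_of_injective, Finset.card_univ]
      intro q q' h
      rw [← (hc q).2, h, (hc q').2]
    refine Finset.card_bij (fun c _ => Dc c) ?_ ?_ ?_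
    · intro c hcm
      have hc := hc c hcm
      rw [Finset.mem_filter]
      refine ⟨Finset.mem_univ _, hDcS c, ?_, ?_⟩
      swap
      · have h1 := hcardW _ (hDcS c)
        have h2 := hbeta _ (hDcS c)
        have h3 := hXcard c hc
        omega
      · have hrho : ∀ v, ∃ z, ((v ∈ K ∧ c (b v) ≠ v) → ∃ e ∈ W, G.inc e = s(v, z)) ∧
            (¬ (v ∈ K ∧ c (b v) ≠ v) → z = v) := by
          intro v
          by_cases h : v ∈ K ∧ c (b v) ≠ v
          · obtain ⟨z, e, he⟩ := hbad c hc v h.2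
            exact ⟨z, fun _ => ⟨e, he⟩, fun h' => absurd h h'⟩
          · exact ⟨v, fun h' => absurd h' h, fun _ => rfl⟩
        choose ρ hρ1 hρ2 using hrho
        have hstep : ∀ e ∈ W, ∀ u v, G.inc e = s(u, v) → (u ∈ K ∧ c (b u) ≠ u) → ρ u = ρ v := by
          intro e he u v hi hu
          have hv := hWK e he u v hi hu.1
          rw [hρ2 v (fun h => hv h.1)]
          obtain ⟨f, hf, hfi⟩ := hρ1 u hu
          have := hW1 u hu.1 e he f hf (by simp [hi]) (by simp [hfi])
          subst this
          rw [hi] at hfi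
          exact (Sym2.congr_right.mp hfi).symm
        have hlift : ∀ u v, G.Reach W u v → G.Reach (W \ Dc c) (ρ u) (ρ v) := by
          intro u v
          apply reach_lift_s9
          intro e he u v hi
          by_cases hu : u ∈ K ∧ c (b u) ≠ u
          · rw [hstep e he u v hi hu]; exact Relation.ReflTransGen.refl
          by_cases hv : v ∈ K ∧ c (b v) ≠ v
          · rw [hstep e he v u (hi.trans Sym2.eq_swap) hv]; exact Relation.ReflTransGen.refl
          rw [hρ2 u hu, hρ2 v hv]
          refine reach_step G ⟨he, ?_⟩ hi
          rintro ⟨_, a, haK, hae, hne⟩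
          rw [hi, Sym2.mem_iff] at hae
          rcases hae with rfl | rfl
          · exact hu ⟨haK, hne⟩
          · exact hv ⟨haK, hne⟩
        have hk : ∀ v, G.Reach ((W \ Dc c) ∪ C) v k0 := by
          intro v
          by_cases hv : v ∈ K
          · exact reach_mono_s9 G Set.subset_union_right (hCr v hv k0 hk0)
          · have h1 := hlift v (c (b v)) ((hb _ _).mp (hc (b v)).2.symm)
            rw [hρ2 v (fun h => hv h.1), hρ2 (c (b v)) (fun h => h.2 (by rw [(hc _).2]))] at h1
            exact reach_trans G (reach_mono_s9 G Set.subset_union_left h1)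
              (reach_mono_s9 G Set.subset_union_right (hCr _ (hc _).1 k0 hk0))
        exact fun u v => reach_trans G (hk u) (reach_symm_s9 G (hk v))
    · intro c hcm c' hcm' heq
      have hc1 := hc c hcm
      have hc2 := hc c' hcm'
      funext q
      have h1 := (hXDc c hc1 (c q)).mpr ⟨(hc1 q).1, by rw [(hc1 q).2]⟩
      rw [heq, hXDc c' hc2] at h1
      rw [(hc1 q).2] at h1
      exact h1.2.symm
    · intro D hD
      obtain ⟨_, hD, hST⟩ := Finset.mem_filter.mp hD
      have hX := (hDcard D hD hST).1
      choose c hcX hcb using halpha D hD hST.1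
      have hcK : ∀ q, c q ∈ K ∧ b (c q) = q := fun q =>
        ⟨(Finset.mem_filter.mp (hcX q)).1, hcb q⟩
      have him : Finset.univ.image c = X D := by
        apply Finset.eq_of_subset_of_card_le
        · intro a ha
          obtain ⟨q, _, rfl⟩ := Finset.mem_image.mp ha
          exact hcX q
        · rw [hX, Finset.card_image_of_injective, Finset.card_univ]
          intro q q' h
          rw [← hcb q, h, hcb q']
      have hXi : ∀ a, a ∈ X D ↔ c (b a) = a := by
        intro a
        constructor
        · intro ha
          rw [← him] at ha
          obtain ⟨q, _, rfl⟩ := Finset.mem_image.mp ha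
          rw [hcb]
        · intro h
          rw [← h]; exact hcX _
      refine ⟨c, ?_, ?_⟩
      · rw [Fintype.mem_piFinset]
        exact fun q => Finset.mem_filter.mpr (hcK q)
      · ext e
        constructor
        · rintro ⟨he, a, haK, hae, hne⟩
          rw [Ne, ← hXi] at hne
          have : ∃ f ∈ D, a ∈ G.inc f := by
            by_contra h
            push Not at h
            exact hne (Finset.mem_filter.mpr ⟨haK, h⟩)
          obtain ⟨f, hf, haf⟩ := this
          rw [hW1 a haK e he f (hD hf).1 hae haf]
          exact hf
        · intro he
          obtain ⟨heW, a, haK, hae⟩ := hD he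
          refine ⟨heW, a, haK, hae, ?_⟩
          rw [Ne, ← hXi]
          intro h
          exact (Finset.mem_filter.mp h).2 e he hae
  have hn0 : (K.card : ℚ) ≠ 0 := by
    have : K.card ≠ 0 := Finset.card_ne_zero.mpr ⟨k0, hk0⟩
    exact_mod_cast this
  have hsum : ∑ D ∈ Finset.univ.filter (fun D : Set E =>
        D ⊆ {e | e ∈ W ∧ ∃ a ∈ K, a ∈ G.inc e} ∧
          G.IsSpanningTree ((W \ D) ∪ C)), (K.card : ℚ) ^ (-(D.ncard : ℤ))
      = (∏ q, (K.filter (fun x => b x = q)).card : ℕ) *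
        (K.card : ℚ) ^ ((Fintype.card Q : ℤ) - K.card) := by
    rw [Finset.sum_congr rfl (g := fun _ => (K.card : ℚ) ^ ((Fintype.card Q : ℤ) - K.card)),
      Finset.sum_const, hDn, nsmul_eq_mul]
    intro D hD
    obtain ⟨_, hD, hST⟩ := Finset.mem_filter.mp hD
    have h1 := (hDcard D hD hST).1
    have h2 := hbeta D hD
    congr 1
    omega
  rw [hsum, hfil]
  have hcq : ((Finset.univ.filter (fun F : Set E => F ⊆ G.edgesWithin K ∧
        (G.mapV b).IsSpanningTree F)).card : ℚ) * (K.card : ℚ) ^ 2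
      = (K.card : ℚ) ^ (Fintype.card Q) * (∏ q, (K.filter (fun x => b x = q)).card : ℕ) := by
    have h3 : Fintype.card Q - 1 + 1 = Fintype.card Q := by omega
    rw [h3] at hcount
    have h6 := congrArg (Nat.cast : ℕ → ℚ) hcount
    push_cast at h6 ⊢
    convert h6
  have h4 : (K.card : ℚ) ^ ((K.card : ℤ) - 2) * (K.card : ℚ) ^ ((Fintype.card Q : ℤ) - K.card)
      * (K.card : ℚ) ^ 2 = (K.card : ℚ) ^ (Fintype.card Q) := by
    rw [← zpow_natCast, ← zpow_natCast, ← zpow_add₀ hn0, ← zpow_add₀ hn0]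
    congr 1
    push_cast
    ring
  have h5 : (K.card : ℚ) ^ 2 ≠ 0 := pow_ne_zero _ hn0
  apply mul_right_cancel₀ h5
  rw [hcq, ← h4]
  ring

theorem sum_D {E : Type*} [Fintype E] (A B : Set E) (hBA : B ⊆ A) (n : ℚ) (hn : n ≠ 0) :
    ∑ D ∈ Finset.univ.filter (fun D : Set E => B ⊆ D ∧ D ⊆ A), n ^ (-(D.ncard : ℤ))
      = n ^ (-(A.ncard : ℤ)) * (1 + n) ^ (A \ B).ncard := by
  have h1 : ∑ D ∈ Finset.univ.filter (fun D : Set E => B ⊆ D ∧ D ⊆ A), n ^ (-(D.ncard : ℤ))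
      = ∑ t ∈ (A \ B).toFinset.powerset, n ^ (-((B.ncard + t.card : ℕ) : ℤ)) := by
    refine Finset.sum_bij' (fun D _ => (D \ B).toFinset) (fun t _ => (t : Set E) ∪ B) ?_ ?_ ?_ ?_ ?_
    · intro D hD
      simp only [Finset.mem_filter, Finset.mem_univ, true_and] at hD
      rw [Finset.mem_powerset]
      intro e he
      rw [Set.mem_toFinset] at he ⊢
      exact ⟨hD.2 he.1, he.2⟩
    · intro t ht
      rw [Finset.mem_powerset] at ht
      simp only [Finset.mem_filter, Finset.mem_univ, true_and]
      refine ⟨Set.subset_union_right, Set.union_subset ?_ hBA⟩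
      intro e he
      exact (Set.mem_toFinset.mp (ht he)).1
    · intro D hD
      simp only [Finset.mem_filter, Finset.mem_univ, true_and] at hD
      simp [hD.1]
    · intro t ht
      rw [Finset.mem_powerset] at ht
      ext e
      have := @ht e
      simp only [Set.mem_toFinset, Set.mem_sdiff, Set.mem_union, Finset.mem_coe] at this ⊢
      tauto
    · intro D hD
      simp only [Finset.mem_filter, Finset.mem_univ, true_and] at hD
      congr 3
      have := Set.ncard_sdiff_add_ncard_of_subset hD.1
      rw [← Set.ncard_eq_toFinset_card']
      omega
  rw [h1, Set.ncard_eq_toFinset_card' (A \ B), ← Finset.sum_pow_mul_eq_add_pow, Finset.mul_sum]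
  refine Finset.sum_congr rfl fun t ht => ?_
  have h2 := Finset.card_le_card (Finset.mem_powerset.mp ht)
  have h3 := Set.ncard_sdiff_add_ncard_of_subset hBA
  rw [Set.ncard_eq_toFinset_card' (A \ B)] at h3
  rw [one_pow, one_mul, ← zpow_natCast, ← zpow_add₀ hn]
  congr 1
  omega

theorem step_lemma {V : Type u} {E : Type v} [Fintype V] [Fintype E] (G : Multigraph V E)
    (K : Finset V) (hK : G.IsClique (K : Set V)) (hKne : K.Nonempty)
    (C : Set E) (hC : C ⊆ G.edgesWithin K) (hCc : C.ncard + 1 = K.card)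
    (hCr : ∀ x ∈ K, ∀ y ∈ K, G.Reach C x y)
    (Z : Set E) (hZ : ∀ e ∈ Z, ∀ a ∈ K, a ∉ G.inc e)
    (Mj Rj : Set E) (hRj : Rj ⊆ Mj)
    (hMj : ∀ e, e ∈ Mj ↔ e ∉ G.edgesWithin K ∧ ∃ a ∈ K, a ∈ G.inc e)
    (hM1 : ∀ a ∈ K, ∀ e ∈ Mj, ∀ f ∈ Mj, a ∈ G.inc e → a ∈ G.inc f → e = f)
    (P : Set E → Prop) (wt : Set E → ℚ)
    (hP : ∀ T T' : Set E, (∀ e, (∀ a ∈ K, a ∉ G.inc e) → (e ∈ T ↔ e ∈ T')) → P T → P T')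
    (hwt : ∀ T T' : Set E, (∀ e, (∀ a ∈ K, a ∉ G.inc e) → (e ∈ T ↔ e ∈ T')) → wt T = wt T') :
    ∑ T ∈ Finset.univ.filter (fun T : Set E => G.IsSpanningTree (T ∪ Z) ∧ P T ∧ Rj ⊆ T), wt T
      = (K.card : ℚ) ^ ((K.card : ℤ) - 2) *
        ∑ T ∈ Finset.univ.filter (fun T : Set E => G.IsSpanningTree (T ∪ (Z ∪ C)) ∧
          (∀ e ∈ T, e ∉ G.edgesWithin K) ∧ P T),
          wt T * ((K.card : ℚ) ^ (-((Mj \ T).ncard : ℤ)) *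
            (1 + (K.card : ℚ)) ^ ((Mj \ Rj) \ T).ncard) := by
  have hn0 : (K.card : ℚ) ≠ 0 := by
    have : K.card ≠ 0 := Finset.card_ne_zero.mpr hKne
    exact_mod_cast this
  have hEK : ∀ e ∈ G.edgesWithin K, ∃ a ∈ K, a ∈ G.inc e := by
    intro e he
    obtain ⟨x, y, hi⟩ := exists_ends G e
    exact ⟨x, he x (by simp [hi]), by simp [hi]⟩
  have hnt : ∀ e, (∀ a ∈ K, a ∉ G.inc e) → e ∉ G.edgesWithin K ∧ e ∉ Mj := by
    intro e he
    refine ⟨fun h => ?_, fun h => ?_⟩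
    · obtain ⟨a, ha, hae⟩ := hEK e h; exact he a ha hae
    · obtain ⟨a, ha, hae⟩ := ((hMj e).mp h).2; exact he a ha hae
  have hZE : ∀ e ∈ Z, e ∉ G.edgesWithin K ∧ e ∉ Mj := fun e he => hnt e (hZ e he)
  let B := Finset.univ.filter (fun W : Set E => (∀ e ∈ W, e ∉ G.edgesWithin K) ∧ P W ∧ Rj ⊆ W)
  have h1 : ∑ T ∈ Finset.univ.filter
      (fun T : Set E => G.IsSpanningTree (T ∪ Z) ∧ P T ∧ Rj ⊆ T), wt T
      = ∑ W ∈ B, wt W * ((Finset.univ.filter (fun F : Set E => F ⊆ G.edgesWithin K ∧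
        G.IsSpanningTree (F ∪ (W ∪ Z)))).card : ℚ) := by
    rw [← Finset.sum_fiberwise_of_maps_to (t := B) (g := fun T => T \ G.edgesWithin K)]
    · refine Finset.sum_congr rfl fun W hW => ?_
      simp only [B, Finset.mem_filter, Finset.mem_univ, true_and] at hW
      obtain ⟨hW1, hW2, hW3⟩ := hW
      rw [mul_comm, ← nsmul_eq_mul, ← Finset.sum_const]
      refine Finset.sum_bij' (fun T _ => T ∩ G.edgesWithin K) (fun F _ => F ∪ W) ?_ ?_ ?_ ?_ ?_
      · intro T hT
        simp only [Finset.mem_filter, Finset.mem_univ, true_and] at hT ⊢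
        obtain ⟨⟨h1, h2, h3⟩, h4⟩ := hT
        refine ⟨Set.inter_subset_right, ?_⟩
        rw [← h4, ← Set.union_assoc, Set.inter_union_sdiff]
        exact h1
      · intro F hF
        simp only [Finset.mem_filter, Finset.mem_univ, true_and] at hF ⊢
        obtain ⟨h1, h2⟩ := hF
        refine ⟨⟨by rwa [Set.union_assoc], ?_, hW3.trans Set.subset_union_right⟩, ?_⟩
        · refine hP W _ ?_ hW2
          intro e he
          have := (hnt e he).1
          have h3 := @h1 e
          simp only [Set.mem_union]
          tauto
        · ext e
          have h3 := @h1 e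
          have h4 := hW1 e
          simp only [Set.mem_union, Set.mem_sdiff]
          tauto
      · intro T hT
        simp only [Finset.mem_filter, Finset.mem_univ, true_and] at hT
        rw [← hT.2, Set.inter_union_sdiff]
      · intro F hF
        simp only [Finset.mem_filter, Finset.mem_univ, true_and] at hF
        ext e
        have h3 := @hF.1 e
        have h4 := hW1 e
        simp only [Set.mem_union, Set.mem_inter_iff]
        tauto
      · intro T hT
        simp only [Finset.mem_filter, Finset.mem_univ, true_and] at hT
        apply hwt
        intro e he
        rw [← hT.2]
        have := (hnt e he).1
        simp [this]
    · intro T hT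
      simp only [B, Finset.mem_filter, Finset.mem_univ, true_and] at hT ⊢
      refine ⟨fun e he => he.2, hP T _ ?_ hT.2.1, ?_⟩
      · intro e he
        have := (hnt e he).1
        simp [this]
      · intro e he
        exact ⟨hT.2.2 he, ((hMj e).mp (hRj he)).1⟩
  rw [h1]
  have h2 : ∀ W ∈ B, wt W * ((Finset.univ.filter (fun F : Set E => F ⊆ G.edgesWithin K ∧
        G.IsSpanningTree (F ∪ (W ∪ Z)))).card : ℚ)
      = ∑ D ∈ Finset.univ.filter (fun D : Set E =>
          D ⊆ {e | e ∈ W ∪ Z ∧ ∃ a ∈ K, a ∈ G.inc e} ∧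
          G.IsSpanningTree (((W ∪ Z) \ D) ∪ C)),
          (K.card : ℚ) ^ ((K.card : ℤ) - 2) * (wt W * (K.card : ℚ) ^ (-(D.ncard : ℤ))) := by
    intro W hW
    simp only [B, Finset.mem_filter, Finset.mem_univ, true_and] at hW
    rw [clique_lemma G K hK hKne (W ∪ Z) ?_ ?_ C hC hCc hCr]
    · rw [← Finset.mul_sum, ← Finset.mul_sum]
      ring
    · rintro e (he | he)
      · exact hW.1 e he
      · exact (hZE e he).1
    · have hmem : ∀ a ∈ K, ∀ e ∈ W ∪ Z, a ∈ G.inc e → e ∈ Mj := by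
        rintro a ha e (he | he) hae
        · exact (hMj e).mpr ⟨hW.1 e he, a, ha, hae⟩
        · exact absurd hae (hZ e he a ha)
      intro a ha e he f hf hae haf
      exact hM1 a ha e (hmem a ha e he hae) f (hmem a ha f hf haf) hae haf
  have h3 : ∀ T : Set E, wt T * ((K.card : ℚ) ^ (-((Mj \ T).ncard : ℤ)) *
            (1 + (K.card : ℚ)) ^ ((Mj \ Rj) \ T).ncard)
      = ∑ D ∈ Finset.univ.filter (fun D : Set E => Rj \ T ⊆ D ∧ D ⊆ Mj \ T),
          (wt T * (K.card : ℚ) ^ (-(D.ncard : ℤ))) := by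
    intro T
    rw [← Finset.mul_sum, sum_D (Mj \ T) (Rj \ T) (fun e he => ⟨hRj he.1, he.2⟩) _ hn0]
    congr 4
    ext e
    simp only [Set.mem_sdiff]
    tauto
  rw [Finset.sum_congr rfl h2, Finset.sum_congr rfl (fun T _ => h3 T), Finset.mul_sum]
  simp only [Finset.mul_sum]
  rw [Finset.sum_sigma', Finset.sum_sigma']
  refine Finset.sum_bij' (fun p _ => ⟨p.1 \ p.2, p.2⟩) (fun p _ => ⟨p.1 ∪ p.2, p.2⟩) ?_ ?_ ?_ ?_ ?_
  · rintro ⟨W, D⟩ h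
    simp only [B, Finset.mem_sigma, Finset.mem_filter, Finset.mem_univ, true_and] at h ⊢
    obtain ⟨⟨h1, h2, h3⟩, h4, h5⟩ := h
    have h4' : ∀ e ∈ D, e ∈ W ∧ e ∈ Mj ∧ ∃ a ∈ K, a ∈ G.inc e := by
      intro e he
      obtain ⟨h6 | h6, a, ha, hae⟩ := h4 he
      · exact ⟨h6, (hMj e).mpr ⟨h1 e h6, a, ha, hae⟩, a, ha, hae⟩
      · exact absurd hae (hZ e h6 a ha)
    refine ⟨⟨?_, fun e he => h1 e he.1, hP W _ ?_ h2⟩, ?_, ?_⟩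
    · convert h5 using 1
      ext e
      have := h4' e
      have h7 := hZE e
      simp only [Set.mem_union, Set.mem_sdiff]
      tauto
    · intro e he
      have := h4' e
      have := (hnt e he).2
      simp only [Set.mem_sdiff]
      tauto
    · intro e he
      have := @h3 e
      simp only [Set.mem_sdiff] at he
      tauto
    · intro e he
      have := h4' e he
      simp only [Set.mem_sdiff]
      tauto
  · rintro ⟨T, D⟩ h
    simp only [B, Finset.mem_sigma, Finset.mem_filter, Finset.mem_univ, true_and] at h ⊢
    obtain ⟨⟨h1, h2, h3⟩, h4, h5⟩ := h
    refine ⟨⟨?_, hP T _ ?_ h3, ?_⟩, ?_, ?_⟩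
    · rintro e (he | he)
      · exact h2 e he
      · exact ((hMj e).mp (h5 he).1).1
    · intro e he
      have := (hnt e he).2
      have h6 := @h5 e
      simp only [Set.mem_sdiff, Set.mem_union] at h6 ⊢
      tauto
    · intro e he
      have h6 := @h4 e
      simp only [Set.mem_sdiff, Set.mem_union] at h6 ⊢
      tauto
    · intro e he
      exact ⟨Or.inl (Or.inr he), ((hMj e).mp (h5 he).1).2⟩
    · convert h1 using 1
      ext e
      have h6 := @h5 e
      have h7 := hZE e
      simp only [Set.mem_sdiff, Set.mem_union] at h6 ⊢
      tauto
  · rintro ⟨W, D⟩ h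
    simp only [B, Finset.mem_sigma, Finset.mem_filter, Finset.mem_univ, true_and] at h
    obtain ⟨⟨h1, h2, h3⟩, h4, h5⟩ := h
    have : (W \ D) ∪ D = W := by
      apply Set.sdiff_union_of_subset
      intro e he
      obtain ⟨h6 | h6, a, ha, hae⟩ := h4 he
      · exact h6
      · exact absurd hae (hZ e h6 a ha)
    simp only [this]
  · rintro ⟨T, D⟩ h
    simp only [Finset.mem_sigma, Finset.mem_filter, Finset.mem_univ, true_and] at h
    obtain ⟨⟨h1, h2, h3⟩, h4, h5⟩ := h
    have : (T ∪ D) \ D = T := by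
      ext e
      have h6 := @h5 e
      simp only [Set.mem_sdiff, Set.mem_union] at h6 ⊢
      tauto
    simp only [this]
  · rintro ⟨W, D⟩ h
    simp only [B, Finset.mem_sigma, Finset.mem_filter, Finset.mem_univ, true_and] at h
    obtain ⟨⟨h1, h2, h3⟩, h4, h5⟩ := h
    simp only
    rw [hwt W (W \ D)]
    intro e he
    have : e ∉ D := by
      intro h6
      obtain ⟨_, a, ha, hae⟩ := h4 h6
      exact he a ha hae
    simp [this]

theorem step_lemma2 {V : Type u} {E : Type v} [Fintype V] [Fintype E] (G : Multigraph V E)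
    (K : Finset V) (hK : G.IsClique (K : Set V)) (hKne : K.Nonempty)
    (C : Set E) (hC : C ⊆ G.edgesWithin K) (hCc : C.ncard + 1 = K.card)
    (hCr : ∀ x ∈ K, ∀ y ∈ K, G.Reach C x y)
    (Z : Set E) (hZ : ∀ e ∈ Z, ∀ a ∈ K, a ∉ G.inc e)
    (Mj Rj : Set E) (hRj : Rj ⊆ Mj)
    (hMj : ∀ e, e ∈ Mj ↔ e ∉ G.edgesWithin K ∧ ∃ a ∈ K, a ∈ G.inc e)
    (hM1 : ∀ a ∈ K, ∀ e ∈ Mj, ∀ f ∈ Mj, a ∈ G.inc e → a ∈ G.inc f → e = f)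
    (P : Set E → Prop) (wt : Set E → ℚ)
    (hP : ∀ T T' : Set E, (∀ e, (∀ a ∈ K, a ∉ G.inc e) → (e ∈ T ↔ e ∈ T')) → P T → P T')
    (hwt : ∀ T T' : Set E, (∀ e, (∀ a ∈ K, a ∉ G.inc e) → (e ∈ T ↔ e ∈ T')) → wt T = wt T') 
    (A A' : Finset (Set E)) (hA : ∀ T, T ∈ A ↔ G.IsSpanningTree (T ∪ Z) ∧ P T ∧ Rj ⊆ T)
    (hA' : ∀ T, T ∈ A' ↔ G.IsSpanningTree (T ∪ (Z ∪ C)) ∧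
          (∀ e ∈ T, e ∉ G.edgesWithin K) ∧ P T) :
    ∑ T ∈ A, wt T
      = (K.card : ℚ) ^ ((K.card : ℤ) - 2) *
        ∑ T ∈ A', wt T * ((K.card : ℚ) ^ (-((Mj \ T).ncard : ℤ)) *
            (1 + (K.card : ℚ)) ^ ((Mj \ Rj) \ T).ncard) := by
  have h := step_lemma G K hK hKne C hC hCc hCr Z hZ Mj Rj hRj hMj hM1 P wt hP hwt
  have e1 : A = Finset.univ.filter (fun T : Set E => G.IsSpanningTree (T ∪ Z) ∧ P T ∧ Rj ⊆ T) := by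
    ext T; simp [hA]
  have e2 : A' = Finset.univ.filter (fun T : Set E => G.IsSpanningTree (T ∪ (Z ∪ C)) ∧
          (∀ e ∈ T, e ∉ G.edgesWithin K) ∧ P T) := by
    ext T; simp [hA']
  rw [e1, e2]; exact h

theorem star_ncard {V E : Type*} [Fintype V] [Fintype E] (G : Multigraph V E) (A : Set V)
    (φ : V → V) (h1 : ∀ v ∈ A, ∃! e, G.inc e = s(φ v, v)) (h2 : ∀ v ∈ A, φ v ∉ A) :
    {e | ∃ v ∈ A, G.inc e = s(φ v, v)}.ncard = A.ncard := by
  symm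
  refine Set.ncard_congr (fun v hv => (h1 v hv).choose) ?_ ?_ ?_
  · intro v hv
    exact ⟨v, hv, (h1 v hv).choose_spec.1⟩
  · intro u v hu hv heq
    have e1 := (h1 u hu).choose_spec.1
    have e2 := (h1 v hv).choose_spec.1
    simp only at e1 e2
    rw [heq, e2, Sym2.eq_iff] at e1
    rcases e1 with h | h
    · exact h.2.symm
    · exact absurd hu (h.1 ▸ h2 v hv)
  · rintro e ⟨v, hv, hi⟩
    exact ⟨v, hv, ((h1 v hv).choose_spec.2 e hi).symm⟩

theorem contract_connectedOn {V E : Type*} (G : Multigraph V E) (Y : Set E)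
    (T : Set {e : E // e ∉ Y}) :
    (G.contract Y).ConnectedOn T ↔
      (G.mapV (Quotient.mk (G.contractSetoid Y))).ConnectedOn (Subtype.val '' T) := by
  have : (G.contract Y).Step T =
      (G.mapV (Quotient.mk (G.contractSetoid Y))).Step (Subtype.val '' T) := by
    funext u v
    apply propext
    constructor
    · rintro ⟨e, he, hi⟩
      exact ⟨e.1, ⟨e, he, rfl⟩, hi⟩
    · rintro ⟨_, ⟨e, he, rfl⟩, hi⟩
      exact ⟨e, he, hi⟩
  unfold ConnectedOn Reach
  rw [this]

end Multigraph
end Aux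

/-- in the setting of disjoint cliques `V₁, …, V_k` joined to
`V₀` by stars, for any `R ⊆ M` and `N ⊆ E(G − U)`:
`τ_G(R ∪ N) = ∏ᵢ |Vᵢ|^{|Vᵢ|−2} · Σ_{T ∈ ST_{G•U}(N)} ∏ᵢ
  |Vᵢ|^{−|Mᵢ−E(T)|} (1+|Vᵢ|)^{|(Mᵢ−R)−E(T)|}`. -/
theorem tau_contract_cliques_subset {V : Type u} {E : Type v} [Fintype V] [Fintype E]
    (G : Multigraph V E) (hconn : G.Connected) (hloop : G.Loopless)
    (k : ℕ) (part : V → Option (Fin k))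
    (hne : ∀ i : Option (Fin k), (part ⁻¹' {i}).Nonempty)
    (hclique : ∀ i : Fin k, G.IsClique (part ⁻¹' {some i}))
    (hbetween : ∀ i j : Fin k, i ≠ j →
      G.edgesBetween (part ⁻¹' {some i}) (part ⁻¹' {some j}) = ∅)
    (Mi : Fin k → Set E)
    (hMi : ∀ i, Mi i = G.edgesBetween (part ⁻¹' {some i}) (part ⁻¹' {none}))
    (M : Set E) (hM : M = ⋃ i, Mi i)
    (hstar : G.StarComponents M (part ⁻¹' {none}))
    (U : Set V) (hU : U = ⋃ i, part ⁻¹' {some i})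
    (rep : Fin k → V) (hrep : ∀ i, rep i ∈ part ⁻¹' {some i})
    (R : Set E) (hR : R ⊆ M)
    (N : Set E) (hN : N ⊆ G.edgesWithin Uᶜ) :
    (G.tau (R ∪ N) : ℚ) =
      (∏ i, ((part ⁻¹' {some i}).ncard : ℚ) ^
        (((part ⁻¹' {some i}).ncard : ℤ) - 2)) *
      ∑ᶠ T ∈ (G.contract (G.edgesWithin U)).ST (Subtype.val ⁻¹' N),
        ∏ i, ((part ⁻¹' {some i}).ncard : ℚ) ^
            (-(((Mi i \ (Subtype.val '' T)).ncard : ℤ))) *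
          (1 + ((part ⁻¹' {some i}).ncard : ℚ)) ^
            (((Mi i \ R) \ (Subtype.val '' T)).ncard) := by
  classical
  let K : Fin k → Finset V := fun i => Finset.univ.filter (fun v => part v = some i)
  have hKmem : ∀ i v, v ∈ K i ↔ part v = some i := by intro i v; simp [K]
  have hKc : ∀ i, part ⁻¹' {some i} = (K i : Set V) := by intro i; ext v; simp [K]
  have hKn : ∀ i, (part ⁻¹' {some i}).ncard = (K i).card := by
    intro i; rw [hKc, Set.ncard_coe_finset]
  have hKcl : ∀ i, G.IsClique (K i : Set V) := fun i => hKc i ▸ hclique i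
  have hrep' : ∀ i, part (rep i) = some i := fun i => hrep i
  have hMi' : ∀ i e, e ∈ Mi i ↔ ∃ u v, G.inc e = s(u, v) ∧ part u = some i ∧ part v = none := by
    intro i e; rw [hMi]; rfl
  have hMiM : ∀ i, Mi i ⊆ M := fun i => hM ▸ Set.subset_iUnion Mi i
  have hbt : ∀ e u v i j, G.inc e = s(u, v) → part u = some i → part v = some j → i = j := by
    intro e u v i j hi hu hv
    by_contra hne
    have : e ∈ G.edgesBetween (part ⁻¹' {some i}) (part ⁻¹' {some j}) := ⟨u, v, hi, hu, hv⟩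
    rw [hbetween i j hne] at this
    exact this
  -- touching facts
  have tM : ∀ i j e, e ∈ Mi i → ∀ a ∈ K j, a ∈ G.inc e → i = j := by
    intro i j e he a ha hae
    obtain ⟨u, v, hi, hu, hv⟩ := (hMi' i e).mp he
    rw [hKmem] at ha
    rw [hi, Sym2.mem_iff] at hae
    rcases hae with rfl | rfl
    · exact Option.some_injective _ (hu.symm.trans ha)
    · rw [hv] at ha; cases ha
  have tC : ∀ i j e, e ∈ G.edgesWithin (K i : Set V) → ∀ a ∈ K j, a ∈ G.inc e → i = j := by
    intro i j e he a ha hae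
    have h1 := (hKmem i a).mp (he a hae)
    exact Option.some_injective _ (h1.symm.trans ((hKmem j a).mp ha))
  have tN : ∀ j e, e ∈ N → ∀ a ∈ K j, a ∉ G.inc e := by
    intro j e he a ha hae
    have := hN he a hae
    apply this
    rw [hU]
    exact Set.mem_iUnion.mpr ⟨j, (hKmem j a).mp ha⟩
  have hMj : ∀ j e, e ∈ Mi j ↔ e ∉ G.edgesWithin (K j : Set V) ∧ ∃ a ∈ K j, a ∈ G.inc e := by
    intro j e
    constructor
    · intro he
      obtain ⟨u, v, hi, hu, hv⟩ := (hMi' j e).mp he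
      refine ⟨fun h => ?_, u, (hKmem j u).mpr hu, by simp [hi]⟩
      have := (hKmem j v).mp (h v (by simp [hi]))
      rw [hv] at this; cases this
    · rintro ⟨h, a, ha, hae⟩
      obtain ⟨z, hz⟩ := Sym2.mem_iff_exists.mp hae
      have ha := (hKmem j a).mp ha
      rw [hMi']
      refine ⟨a, z, hz, ha, ?_⟩
      cases hpz : part z with
      | none => rfl
      | some i =>
        exfalso
        have hij := hbt e a z j i hz ha hpz
        subst hij
        apply h
        intro y hy
        rw [hz, Sym2.mem_iff] at hy
        rcases hy with rfl | rfl
        · exact (hKmem j _).mpr ha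
        · exact (hKmem j _).mpr hpz
  have hM1 : ∀ j, ∀ a ∈ K j, ∀ e ∈ Mi j, ∀ f ∈ Mi j, a ∈ G.inc e → a ∈ G.inc f → e = f := by
    intro j a ha e he f hf hae haf
    have ha := (hKmem j a).mp ha
    obtain ⟨w, hw, hall⟩ := hstar e (hMiM j he)
    have hw : part w = none := hw
    have hee : G.EdgeConn M e e := ⟨a, a, hae, hae, Relation.ReflTransGen.refl⟩
    have hef : G.EdgeConn M e f := ⟨a, a, hae, haf, Relation.ReflTransGen.refl⟩
    have h1 := hall e (hMiM j he) hee
    have h2 := hall f (hMiM j hf) hef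
    have hne : a ≠ w := by rintro rfl; rw [hw] at ha; cases ha
    have i1 := (Sym2.mem_and_mem_iff hne).mp ⟨hae, h1.1⟩
    have i2 := (Sym2.mem_and_mem_iff hne).mp ⟨haf, h2.1⟩
    exact h2.2.2 e (hMiM j he) hee (i1.trans i2.symm)
  -- stars in the cliques
  let φ : V → V := fun v => (part v).elim v rep
  have hφs : ∀ v i, part v = some i → φ v = rep i := by intro v i h; simp [φ, h]
  have hφn : ∀ v, part v = none → φ v = v := by intro v h; simp [φ, h]
  let St : Fin k → Set E := fun i => {e | ∃ v, v ∈ {v | part v = some i ∧ v ≠ rep i} ∧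
    G.inc e = s(rep i, v)}
  have hStC : ∀ i, St i ⊆ G.edgesWithin (K i : Set V) := by
    rintro i e ⟨v, ⟨hv, _⟩, hi⟩ y hy
    rw [hi, Sym2.mem_iff] at hy
    rcases hy with rfl | rfl
    · exact (hKmem _ _).mpr (hrep' i)
    · exact (hKmem _ _).mpr hv
  have hedge : ∀ i v, part v = some i → v ≠ rep i → ∃! e, G.inc e = s(rep i, v) := by
    intro i v hv hne
    exact (hclique i).1 (rep i) (hrep i) v hv hne.symm
  have hStc : ∀ i, (St i).ncard + 1 = (K i).card := by
    intro i
    have h1 := star_ncard G {v | part v = some i ∧ v ≠ rep i} (fun _ => rep i)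
      (fun v hv => hedge i v hv.1 hv.2) (fun v _ h => h.2 rfl)
    have h2 : {v | part v = some i ∧ v ≠ rep i} = ((K i).erase (rep i) : Set V) := by
      ext v; simp [K, and_comm]
    have h3 : (St i).ncard = ((K i).erase (rep i)).card := by
      rw [← Set.ncard_coe_finset, ← h2]; exact h1
    rw [h3]
    exact Finset.card_erase_add_one ((hKmem _ _).mpr (hrep' i))
  have hStr0 : ∀ i v, part v = some i → G.Reach (St i) (rep i) v := by
    intro i v hv
    by_cases hne : v = rep i
    · rw [hne]; exact Relation.ReflTransGen.refl
    · obtain ⟨e, he, _⟩ := hedge i v hv hne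
      exact reach_step G (e := e) ⟨v, ⟨hv, hne⟩, he⟩ he
  have hStr : ∀ i, ∀ x ∈ K i, ∀ y ∈ K i, G.Reach (St i) x y := fun i x hx y hy =>
    reach_trans G (reach_symm_s9 G (hStr0 i x ((hKmem i x).mp hx))) (hStr0 i y ((hKmem i y).mp hy))
  let Cs : Finset (Fin k) → Set E := fun I => {e | ∃ i ∈ I, e ∈ St i}
  -- the induction
  have claim : ∀ I : Finset (Fin k), (G.tau (R ∪ N) : ℚ) =
      (∏ i ∈ I, ((K i).card : ℚ) ^ (((K i).card : ℤ) - 2)) *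
      ∑ T ∈ Finset.univ.filter (fun T : Set E => G.IsSpanningTree (T ∪ Cs I) ∧
          (∀ i ∈ I, ∀ e ∈ T, e ∉ G.edgesWithin (K i : Set V)) ∧ N ⊆ T ∧
          ∀ i, i ∉ I → R ∩ Mi i ⊆ T),
        ∏ i ∈ I, (((K i).card : ℚ) ^ (-(((Mi i \ T).ncard : ℤ))) *
          (1 + ((K i).card : ℚ)) ^ (((Mi i \ R) \ T).ncard)) := by
    intro I
    induction I using Finset.induction_on with
    | empty =>
      simp only [Finset.prod_empty, one_mul, Finset.sum_const, nsmul_eq_mul, mul_one]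
      congr 1
      unfold tau
      rw [← Set.ncard_coe_finset]
      congr 1
      ext T
      have hCe : Cs ∅ = ∅ := by ext e; simp [Cs]
      simp only [Multigraph.ST, Set.mem_setOf_eq, Finset.coe_filter, Finset.mem_univ, true_and, hCe,
        Set.union_empty]
      refine and_congr_right fun _ => ?_
      constructor
      · intro h
        refine ⟨by simp, Set.subset_union_right.trans h, fun i _ => ?_⟩
        exact (Set.inter_subset_left.trans Set.subset_union_left).trans h
      · rintro ⟨_, h1, h2⟩
        refine Set.union_subset ?_ h1
        intro e he
        have heM := hR he
        rw [hM] at heM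
        obtain ⟨i, hi⟩ := Set.mem_iUnion.mp heM
        exact h2 i (by simp) ⟨he, hi⟩
    | insert j I hj ih =>
      rw [ih]
      have hne : ∀ i ∈ I, i ≠ j := fun i hi h => hj (h ▸ hi)
      let P : Set E → Prop := fun T =>
        (∀ i ∈ I, ∀ e ∈ T, e ∉ G.edgesWithin (K i : Set V)) ∧ N ⊆ T ∧
          ∀ i, i ∉ insert j I → R ∩ Mi i ⊆ T
      have hstep := step_lemma2 G (K j) (hKcl j) ⟨rep j, (hKmem _ _).mpr (hrep' j)⟩
        (St j) (hStC j) (hStc j) (hStr j) (Cs I) ?_ (Mi j) (R ∩ Mi j) Set.inter_subset_right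
        (hMj j) (hM1 j) P
        (fun T => ∏ i ∈ I, (((K i).card : ℚ) ^ (-(((Mi i \ T).ncard : ℤ))) *
          (1 + ((K i).card : ℚ)) ^ (((Mi i \ R) \ T).ncard))) ?_ ?_ _ _
        (fun T => Iff.trans Finset.mem_filter (and_iff_right (Finset.mem_univ T)))
        (fun T => Iff.trans Finset.mem_filter (and_iff_right (Finset.mem_univ T)))
      · have f1 : (Finset.univ.filter (fun T : Set E => G.IsSpanningTree (T ∪ Cs I) ∧
          (∀ i ∈ I, ∀ e ∈ T, e ∉ G.edgesWithin (K i : Set V)) ∧ N ⊆ T ∧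
          ∀ i, i ∉ I → R ∩ Mi i ⊆ T)) = Finset.univ.filter (fun T : Set E =>
            G.IsSpanningTree (T ∪ Cs I) ∧ P T ∧ R ∩ Mi j ⊆ T) := by
          apply Finset.filter_congr
          intro T _
          refine and_congr_right fun _ => ?_
          simp only [P, Finset.mem_insert, not_or]
          constructor
          · rintro ⟨h1, h2, h3⟩
            exact ⟨⟨h1, h2, fun i hi => h3 i hi.2⟩, h3 j hj⟩
          · rintro ⟨⟨h1, h2, h3⟩, h4⟩
            refine ⟨h1, h2, fun i hi => ?_⟩
            by_cases hij : i = j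
            · rw [hij]; exact h4
            · exact h3 i ⟨hij, hi⟩
        have hCsI : Cs (insert j I) = Cs I ∪ St j := by
          ext e
          simp only [Cs, Set.mem_setOf_eq, Finset.mem_insert, Set.mem_union]
          constructor
          · rintro ⟨i, rfl | hi, he⟩
            · exact Or.inr he
            · exact Or.inl ⟨i, hi, he⟩
          · rintro (⟨i, hi, he⟩ | he)
            · exact ⟨i, Or.inr hi, he⟩
            · exact ⟨j, Or.inl rfl, he⟩
        have f2 : (Finset.univ.filter (fun T : Set E => G.IsSpanningTree (T ∪ Cs (insert j I)) ∧
          (∀ i ∈ insert j I, ∀ e ∈ T, e ∉ G.edgesWithin (K i : Set V)) ∧ N ⊆ T ∧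
          ∀ i, i ∉ insert j I → R ∩ Mi i ⊆ T)) = Finset.univ.filter (fun T : Set E =>
            G.IsSpanningTree (T ∪ (Cs I ∪ St j)) ∧
            (∀ e ∈ T, e ∉ G.edgesWithin (K j : Set V)) ∧ P T) := by
          apply Finset.filter_congr
          intro T _
          rw [hCsI]
          refine and_congr_right fun _ => ?_
          simp only [P, Finset.forall_mem_insert]
          tauto
        rw [f1, f2, hstep, Finset.prod_insert hj]
        have f3 : ∀ T : Set E, (Mi j \ (R ∩ Mi j)) \ T = (Mi j \ R) \ T := by
          intro T; ext e; simp only [Set.mem_sdiff, Set.mem_inter_iff]; tauto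
        simp only [f3, Finset.prod_insert hj]
        rw [mul_comm (((K j).card : ℚ) ^ (((K j).card : ℤ) - 2)) (∏ i ∈ I, _), mul_assoc]
        congr 2
        refine Finset.sum_congr rfl fun T _ => ?_
        ring
      · rintro e ⟨i, hi, he⟩ a ha hae
        exact hne i hi (tC i j e (hStC i he) a ha hae)
      · rintro T T' hTT ⟨h1, h2, h3⟩
        refine ⟨?_, ?_, ?_⟩
        · intro i hi e he hec
          refine h1 i hi e ((hTT e ?_).mpr he) hec
          exact fun a ha hae => hne i hi (tC i j e hec a ha hae)
        · intro e he
          exact (hTT e (tN j e he)).mp (h2 he)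
        · intro i hi e he
          refine (hTT e ?_).mp (h3 i hi he)
          intro a ha hae
          have := tM i j e he.2 a ha hae
          exact hi (by simp [this])
      · intro T T' hTT
        refine Finset.prod_congr rfl fun i hi => ?_
        have g : ∀ e ∈ Mi i, (e ∈ T ↔ e ∈ T') := fun e he =>
          hTT e (fun a ha hae => hne i hi (tM i j e he a ha hae))
        have g1 : Mi i \ T = Mi i \ T' := by
          ext e; have := g e; simp only [Set.mem_sdiff]; tauto
        have g2 : (Mi i \ R) \ T = (Mi i \ R) \ T' := by
          ext e; have := g e; simp only [Set.mem_sdiff]; tauto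
        rw [g1, g2]
  have hfin := claim Finset.univ
  rw [hfin]
  simp only [hKn]
  congr 1
  -- the contraction
  set Y := G.edgesWithin U with hY
  have hUmem : ∀ v, v ∈ U ↔ ∃ i, part v = some i := by
    intro v; rw [hU]; simp
  have hYC : ∀ e, e ∈ Y ↔ ∃ i, e ∈ G.edgesWithin (K i : Set V) := by
    intro e
    constructor
    · intro he
      obtain ⟨x, y, hi⟩ := exists_ends G e
      obtain ⟨i, hxi⟩ := (hUmem x).mp (he x (by simp [hi]))
      obtain ⟨j, hyj⟩ := (hUmem y).mp (he y (by simp [hi]))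
      have hij := hbt e x y i j hi hxi hyj
      subst hij
      refine ⟨i, fun z hz => ?_⟩
      rw [hi, Sym2.mem_iff] at hz
      rcases hz with rfl | rfl
      · exact (hKmem _ _).mpr hxi
      · exact (hKmem _ _).mpr hyj
    · rintro ⟨i, he⟩ z hz
      exact (hUmem z).mpr ⟨i, (hKmem _ _).mp (he z hz)⟩
  have hCsY : Cs Finset.univ ⊆ Y := by
    rintro e ⟨i, _, he⟩
    exact (hYC e).mpr ⟨i, hStC i he⟩
  let mk : V → Quotient (G.contractSetoid Y) := Quotient.mk (G.contractSetoid Y)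
  have hmk : ∀ u v, mk u = mk v ↔ G.Reach Y u v := fun u v => Quotient.eq
  have hφr : ∀ v, G.Reach (Cs Finset.univ) (φ v) v := by
    intro v
    cases hp : part v with
    | none => rw [hφn v hp]; exact Relation.ReflTransGen.refl
    | some i =>
      rw [hφs v i hp]
      exact reach_mono_s9 G (show St i ⊆ Cs Finset.univ from fun e he => ⟨i, Finset.mem_univ _, he⟩) (hStr0 i v hp)
  have hYφ : ∀ u v, G.Reach Y u v → φ u = φ v := by
    intro u v h
    refine reach_closed G (fun z => φ u = φ z) ?_ h rfl
    intro e he x y hi hx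
    obtain ⟨i, hei⟩ := (hYC e).mp he
    have hxi := (hKmem _ _).mp (hei x (by simp [hi]))
    have hyi := (hKmem _ _).mp (hei y (by simp [hi]))
    rw [hx, hφs x i hxi, hφs y i hyi]
  have hφφ : ∀ v, φ (φ v) = φ v := by
    intro v
    cases hp : part v with
    | none => rw [hφn v hp, hφn v hp]
    | some i => rw [hφs v i hp, hφs _ i (hrep' i)]
  have hcardQ : Nat.card (Quotient (G.contractSetoid Y)) = {v | φ v = v}.ncard := by
    symm
    refine Nat.card_eq_of_bijective (fun v : {v | φ v = v} => mk v.1) ⟨?_, ?_⟩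
    · rintro ⟨u, hu⟩ ⟨v, hv⟩ h
      have := hYφ u v ((hmk u v).mp h)
      apply Subtype.ext
      exact hu.symm.trans (this.trans hv)
    · intro q
      obtain ⟨v, rfl⟩ := Quotient.mk_surjective q
      exact ⟨⟨φ v, hφφ v⟩, (hmk _ _).mpr (reach_mono_s9 G hCsY (hφr v))⟩
  have hcardCs : (Cs Finset.univ).ncard = {v | φ v = v}ᶜ.ncard := by
    have h1 := star_ncard G {v | φ v = v}ᶜ φ ?_ ?_
    · rw [← h1]
      congr 1
      ext e
      constructor
      · rintro ⟨i, _, v, ⟨hv, hne⟩, hi⟩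
        refine ⟨v, ?_, by rw [hφs v i hv]; exact hi⟩
        change ¬ (φ v = v)
        rw [hφs v i hv]; exact hne.symm
      · rintro ⟨v, hv, hi⟩
        have hv : ¬ (φ v = v) := hv
        cases hp : part v with
        | none => exact absurd (hφn v hp) hv
        | some i =>
          rw [hφs v i hp] at hv hi
          exact ⟨i, Finset.mem_univ _, v, ⟨hp, Ne.symm hv⟩, hi⟩
    · intro v hv
      have hv : ¬ (φ v = v) := hv
      cases hp : part v with
      | none => exact absurd (hφn v hp) hv
      | some i =>
        rw [hφs v i hp] at hv ⊢
        exact hedge i v hp (Ne.symm hv)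
    · intro v _ h
      exact h (hφφ v)
  have hcardV : Nat.card (Quotient (G.contractSetoid Y)) + (Cs Finset.univ).ncard
      = Nat.card V := by
    rw [hcardQ, hcardCs, Set.ncard_add_ncard_compl]
  have hST : ∀ T : Set {e : E // e ∉ Y}, (G.contract Y).IsSpanningTree T ↔
      G.IsSpanningTree (Subtype.val '' T ∪ Cs Finset.univ) := by
    intro T
    unfold IsSpanningTree
    rw [contract_connectedOn, ← connectedOn_mapV_iff G (Cs Finset.univ) (Subtype.val '' T)
      (Quotient.mk (G.contractSetoid Y))]
    · refine and_congr_right fun _ => ?_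
      rw [Set.ncard_union_eq, Set.ncard_image_of_injective _ Subtype.val_injective]
      · omega
      · rw [Set.disjoint_left]
        rintro _ ⟨e, _, rfl⟩ h
        exact e.2 (hCsY h)
    · intro e he u v hi
      exact (hmk u v).mpr (reach_step G (hCsY he) hi)
    · intro u v h
      have := hYφ u v ((hmk u v).mp h)
      exact reach_trans G (reach_symm_s9 G (hφr u)) (this ▸ hφr v)
    · exact Quotient.mk_surjective
  have hNY : ∀ e ∈ N, e ∉ Y := by
    intro e he hy
    obtain ⟨x, y, hi⟩ := exists_ends G e
    exact hN he x (by simp [hi]) (hy x (by simp [hi]))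
  have himg : ((fun T : Set {e : E // e ∉ Y} => (Subtype.val '' T : Set E)) ''
      ((G.contract Y).ST (Subtype.val ⁻¹' N)))
      = ((Finset.univ.filter (fun T : Set E => G.IsSpanningTree (T ∪ Cs Finset.univ) ∧
          (∀ i ∈ (Finset.univ : Finset (Fin k)), ∀ e ∈ T, e ∉ G.edgesWithin (K i : Set V)) ∧
          N ⊆ T ∧ ∀ i, i ∉ (Finset.univ : Finset (Fin k)) → R ∩ Mi i ⊆ T) :
          Finset (Set E)) : Set (Set E)) := by
    ext T
    simp only [Finset.coe_filter, Finset.mem_univ, true_and, Set.mem_setOf_eq, Set.mem_image, Multigraph.ST]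
    constructor
    · rintro ⟨T, ⟨h1, h2⟩, rfl⟩
      refine ⟨(hST T).mp h1, ?_, ?_, fun i h => absurd trivial h⟩
      · rintro i _ _ ⟨e, he, rfl⟩ h
        exact e.2 ((hYC _).mpr ⟨i, h⟩)
      · intro e he
        exact ⟨⟨e, hNY e he⟩, h2 he, rfl⟩
    · rintro ⟨h1, h2, h3, _⟩
      have hT : Subtype.val '' (Subtype.val ⁻¹' T : Set {e : E // e ∉ Y}) = T := by
        ext e
        constructor
        · rintro ⟨x, hx, rfl⟩
          exact hx
        · intro h
          refine ⟨⟨e, fun hy => ?_⟩, h, rfl⟩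
          obtain ⟨i, hi⟩ := (hYC e).mp hy
          exact h2 i trivial e h hi
      refine ⟨Subtype.val ⁻¹' T, ⟨(hST _).mpr (by rwa [hT]), fun e he => h3 he⟩, hT⟩
  rw [← finsum_mem_coe_finset, ← himg, finsum_mem_image]
  intro T _ T' _ h
  exact Set.image_injective.mpr Subtype.val_injective h

end PaperST
end
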